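/- Every planar finite simple graph G satisfies f_2(G) ≤ 310. -/

import Mathlib

open scoped Classical

namespace InducedArboricity

/-- The edges of the subgraph of `G` induced by vertex set `S`, viewed as edges of `G`. -/
def forestEdges {V : Type*} (G : SimpleGraph V) (S : Set V) : Set (Sym2 V) :=
  {e | e ∈ G.edgeSet ∧ ∀ x ∈ e, x ∈ S}

/-- The number of edges of the connected component of `v` in `H`. -/
noncomputable def compEdgeCount {W : Type*} (H : SimpleGraph W) (v : W) : ℕ :=
  {e | e ∈ H.edgeSet ∧ ∀ x ∈ e, H.Reachable v x}.ncard

/-- `S` induces a `k`-strong forest in `G`: the induced subgraph is acyclic and each of its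
connected components has at least `k` edges. -/
def IsStrongForest {V : Type*} (G : SimpleGraph V) (k : ℕ) (S : Set V) : Prop :=
  (G.induce S).IsAcyclic ∧ ∀ v : S, k ≤ compEdgeCount (G.induce S) v

/-- An edge `e` of `G` is `k`-valid if it lies in some `k`-strong forest of `G`. -/
def KValid {V : Type*} (G : SimpleGraph V) (k : ℕ) (e : Sym2 V) : Prop :=
  ∃ S : Set V, IsStrongForest G k S ∧ e ∈ forestEdges G S

/-- The `k`-strong induced arboricity: the least number of `k`-strong forests of `G`
covering all `k`-valid edges of `G`. -/
noncomputable def fStrong {V : Type*} (G : SimpleGraph V) (k : ℕ) : ℕ :=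
  sInf {N | ∃ F : Fin N → Set V,
    (∀ i, IsStrongForest G k (F i)) ∧
    ∀ e : Sym2 V, KValid G k e → ∃ i, e ∈ forestEdges G (F i)}

/-- `G` is a `d`-shallow minor of `H`. -/
def IsShallowMinor {V W : Type*} (d : ℕ) (G : SimpleGraph V) (H : SimpleGraph W) : Prop :=
  ∃ B : V → Set W,
    Pairwise (Function.onFun Disjoint B) ∧
    (∀ v, ∃ c : B v, ∀ y : B v,
      (H.induce (B v)).Reachable c y ∧ (H.induce (B v)).dist c y ≤ d) ∧
    (∀ u v, G.Adj u v → ∃ x ∈ B u, ∃ y ∈ B v, H.Adj x y)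

/-- A class of finite simple graphs, one set of graphs for each number of vertices. -/
def GraphClass : Type :=
  ∀ n : ℕ, Set (SimpleGraph (Fin n))

/-- A class of graphs has bounded expansion if for every `d` there is a constant `a` such that
every `d`-shallow minor of a member of the class has at most `a` times as many edges
as vertices. -/
def BoundedExpansion (C : GraphClass) : Prop :=
  ∀ d : ℕ, ∃ a : ℕ, ∀ (m : ℕ) (G : SimpleGraph (Fin m)),
    (∃ n : ℕ, ∃ H ∈ C n, IsShallowMinor d G H) → G.edgeSet.ncard ≤ a * m

/-- A class of graphs is nowhere dense if for every `d` some graph is not a `d`-shallow minor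
of any member of the class. -/
def NowhereDense (C : GraphClass) : Prop :=
  ∀ d : ℕ, ∃ (m : ℕ) (G : SimpleGraph (Fin m)), ¬ ∃ n : ℕ, ∃ H ∈ C n, IsShallowMinor d G H

/-- The closed neighborhood of `v` in `G`. -/
def closedNbr {V : Type*} (G : SimpleGraph V) (v : V) : Set V :=
  insert v (G.neighborSet v)

/-- The sum of the labels over the closed neighborhood of `v`. -/
noncomputable def closedNbrSum {V : Type*} [Fintype V] (G : SimpleGraph V)
    (f : V → ℕ) (v : V) : ℕ :=
  ∑ x : V, if x ∈ closedNbr G v then f x else 0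

/-- A labeling is distinguishing if adjacent vertices with different closed neighborhoods
receive different label sums over their closed neighborhoods. -/
def Distinguishing {V : Type*} [Fintype V] (G : SimpleGraph V) (f : V → ℕ) : Prop :=
  ∀ u v : V, G.Adj u v → closedNbr G u ≠ closedNbr G v →
    closedNbrSum G f u ≠ closedNbrSum G f v

/-- The adjacent closed vertex-distinguishing number of `G`. -/
noncomputable def disNumber {V : Type*} [Fintype V] (G : SimpleGraph V) : ℕ :=
  sInf {L | 1 ≤ L ∧ ∃ f : V → ℕ, (∀ v, 1 ≤ f v ∧ f v ≤ L) ∧ Distinguishing G f}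

/-- A proper coloring in which any two color classes together induce a forest. -/
def IsAcyclicColoring {V : Type*} (G : SimpleGraph V) {m : ℕ} (c : V → Fin m) : Prop :=
  (∀ u v : V, G.Adj u v → c u ≠ c v) ∧
  ∀ i j : Fin m, (G.induce {v | c v = i ∨ c v = j}).IsAcyclic

/-- The acyclic chromatic number of `G`. -/
noncomputable def chiAcyc {V : Type*} (G : SimpleGraph V) : ℕ :=
  sInf {m | ∃ c : V → Fin m, IsAcyclicColoring G c}

/-- The edge arboricity of `G`: the least number of (not necessarily induced) forests
covering all edges of `G`. -/
noncomputable def arboricity {V : Type*} (G : SimpleGraph V) : ℕ :=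
  sInf {N | ∃ F : Fin N → SimpleGraph V,
    (∀ i, F i ≤ G ∧ (F i).IsAcyclic) ∧
    ∀ e ∈ G.edgeSet, ∃ i, e ∈ (F i).edgeSet}

/-- `G` admits a tree decomposition of width at most `t`. -/
def HasTreewidthAtMost {V : Type*} (G : SimpleGraph V) (t : ℕ) : Prop :=
  ∃ (ι : Type) (T : SimpleGraph ι) (B : ι → Finset V),
    T.IsTree ∧
    (∀ e ∈ G.edgeSet, ∃ i, ∀ x ∈ e, x ∈ B i) ∧
    (∀ v : V, (T.induce {i | v ∈ B i}).Connected) ∧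
    (∀ i, (B i).card ≤ t + 1)

/-- The tree-width of `G`. -/
noncomputable def treewidth {V : Type*} (G : SimpleGraph V) : ℕ :=
  sInf {t | HasTreewidthAtMost G t}

/-- `G` has tree-depth at most `d`: there is a "forest order" on the vertices (the
ancestor order of a rooted spanning forest) in which ancestor sets are chains of at most
`d` vertices and endpoints of edges of `G` are comparable.  Equivalently, every connected
component of `G` is a subgraph of the transitive closure of a rooted tree of depth `d`. -/
def HasTreedepthAtMost {V : Type*} (G : SimpleGraph V) (d : ℕ) : Prop :=
  ∃ le : V → V → Prop, IsPartialOrder V le ∧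
    (∀ v : V, IsChain le {u | le u v}) ∧
    (∀ u v : V, G.Adj u v → le u v ∨ le v u) ∧
    (∀ v : V, {u | le u v}.ncard ≤ d)

/-- The tree-depth of `G`. -/
noncomputable def treedepth {V : Type*} (G : SimpleGraph V) : ℕ :=
  sInf {d | HasTreedepthAtMost G d}

/-- `G` is a minor of `H`, witnessed by disjoint connected branch sets. -/
def IsMinorOf {V W : Type*} (G : SimpleGraph V) (H : SimpleGraph W) : Prop :=
  ∃ B : V → Set W,
    Pairwise (Function.onFun Disjoint B) ∧
    (∀ v, (B v).Nonempty) ∧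
    (∀ v, (H.induce (B v)).Connected) ∧
    (∀ u v, G.Adj u v → ∃ x ∈ B u, ∃ y ∈ B v, H.Adj x y)

/-- A class of graphs closed under taking minors. -/
def MinorClosed (C : GraphClass) : Prop :=
  ∀ (m n : ℕ) (G : SimpleGraph (Fin m)) (H : SimpleGraph (Fin n)),
    H ∈ C n → IsMinorOf G H → G ∈ C m

/-- Planarity, via Wagner's characterization: no `K₅` and no `K₃,₃` minor. -/
def IsPlanar {V : Type*} (G : SimpleGraph V) : Prop :=
  ¬ IsMinorOf (SimpleGraph.completeGraph (Fin 5)) G ∧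
  ¬ IsMinorOf (completeBipartiteGraph (Fin 3) (Fin 3)) G

/-!
A graph without a `K₃,₃` minor has an acyclic colouring with nine colours: colour a region bounded
by a closed walk which consists of two arcs with at most three colours each. Some shortest path
through the region between the extreme boundary vertices of one arc leaves only components that see
a single side of the walk, for otherwise rerouting it would produce a `K₃,₃` minor. Colour that path
with the three remaining colours by distance modulo three, and recurse. The neighbours of a vertex
on a shortest path lie among three consecutive vertices, so earlier neighbours get distinct colours,
which excludes two-coloured cycles. Colouring modulo two instead gives a proper `6`-colouring.

Every edge lies in the forest induced by two of the nine colour classes. The components of that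
forest with at least two edges form one strong forest. A valid edge which is itself a component has
a neighbour adjacent to exactly one of its ends. Attach each such edge to such a neighbour; the
resulting spiders can be contracted, the contracted graph has a proper `6`-colouring, and the
spiders with bodies of one colour induce a strong forest. This uses `1 + 6` strong forests per
pair of classes, hence `7 * 36 = 252` in total.
-/

section Connectivity

variable {V : Type*} {G : SimpleGraph V} {S T U : Set V} {a b c v : V}

/-- The graph on all of `V` whose edges are the edges of `G` inside `S`. Vertices outside `S` become
isolated, so walks and distances inside `S` need not be transported to the subtype `S`. -/
def restrictTo (G : SimpleGraph V) (S : Set V) : SimpleGraph V :=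
  (G.induce S).spanningCoe

@[simp]
theorem restrictTo_adj : (restrictTo G S).Adj a b ↔ a ∈ S ∧ b ∈ S ∧ G.Adj a b := by
  simp only [restrictTo, SimpleGraph.map_adj, SimpleGraph.comap_adj,
    Function.Embedding.subtype_apply, Subtype.exists, exists_and_left, exists_prop, ↓existsAndEq,
    and_true, true_and]
  tauto

theorem restrictTo_mono (h : S ⊆ T) : restrictTo G S ≤ restrictTo G T := by
  intro a b hab
  rw [restrictTo_adj] at hab ⊢
  exact ⟨h hab.1, h hab.2.1, hab.2.2⟩

theorem restrictTo_le : restrictTo G S ≤ G :=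
  fun _ _ h => (restrictTo_adj.1 h).2.2

theorem reachable_restrictTo (h : (G.induce S).Preconnected) (ha : a ∈ S) (hb : b ∈ S) :
    (restrictTo G S).Reachable a b :=
  (h ⟨a, ha⟩ ⟨b, hb⟩).map (SimpleGraph.Embedding.spanningCoe _).toHom

theorem support_subset_of_mem (p : (restrictTo G S).Walk a b) (ha : a ∈ S) :
    {z | z ∈ p.support} ⊆ S := by
  induction p with
  | nil => simpa using ha
  | cons h p ih =>
    intro z hz
    rcases List.mem_cons.1 hz with rfl | hz
    exacts [ha, ih (restrictTo_adj.1 h).2.1 hz]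

theorem connected_induce_of_le {H : SimpleGraph V} (h : (H.induce S).Connected) (hHG : H ≤ G) :
    (G.induce S).Connected :=
  h.mono fun _ _ hab => hHG hab

theorem connected_induce_support (p : (restrictTo G S).Walk a b) :
    (G.induce {z | z ∈ p.support}).Connected :=
  connected_induce_of_le p.connected_induce_support restrictTo_le

/-- The connected component of `v` in the subgraph of `G` induced by `S`, as a set of vertices of
`G`; it is the junk value `{v}` for `v ∉ S`. -/
def componentIn (G : SimpleGraph V) (S : Set V) (v : V) : Set V :=
  {z | (restrictTo G S).Reachable v z}

theorem mem_componentIn_self : v ∈ componentIn G S v :=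
  SimpleGraph.Reachable.refl v

theorem mem_componentIn_of_adj (ha : a ∈ componentIn G S v) (haS : a ∈ S) (hbS : b ∈ S)
    (hab : G.Adj a b) : b ∈ componentIn G S v :=
  ha.trans (SimpleGraph.Adj.reachable (restrictTo_adj.2 ⟨haS, hbS, hab⟩))

theorem componentIn_eq (h : b ∈ componentIn G S a) : componentIn G S b = componentIn G S a :=
  Set.ext fun _ => ⟨fun hz => h.trans hz, fun hz => h.symm.trans hz⟩

theorem componentIn_mono (h : S ⊆ T) : componentIn G S v ⊆ componentIn G T v :=
  fun _ hz => hz.mono (restrictTo_mono h)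

theorem componentIn_subset_of_forall_adj (hv : v ∈ T)
    (hT : ∀ x ∈ T, ∀ y ∈ S, x ∈ S → G.Adj x y → y ∈ T) : componentIn G S v ⊆ T := by
  rintro z ⟨p⟩
  induction p with
  | nil => exact hv
  | cons h _ ih =>
    have h' := restrictTo_adj.1 h
    exact ih (hT _ hv _ h'.2.1 h'.1 h'.2.2)

theorem componentIn_subset (hv : v ∈ S) : componentIn G S v ⊆ S :=
  componentIn_subset_of_forall_adj hv fun _ _ _ hy _ _ => hy

theorem connected_componentIn : (G.induce (componentIn G S v)).Connected := by
  have hsupp : componentIn G S v = ((restrictTo G S).connectedComponentMk v).supp := by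
    ext z
    rw [SimpleGraph.ConnectedComponent.mem_supp_iff, SimpleGraph.ConnectedComponent.eq]
    exact SimpleGraph.reachable_comm
  rw [hsupp]
  exact connected_induce_of_le
    (SimpleGraph.ConnectedComponent.maximal_connected_induce_supp _).prop restrictTo_le

theorem subset_componentIn (hT : (G.induce T).Preconnected) (hTS : T ⊆ S) (hv : v ∈ T) :
    T ⊆ componentIn G S v :=
  fun _ hz => (reachable_restrictTo hT hv hz).mono (restrictTo_mono hTS)

theorem connected_induce_of_subset_componentIn (hv : v ∈ S) (hS : S ⊆ componentIn G S v) :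
    (G.induce S).Connected := by
  have hcomp := connected_componentIn (G := G) (S := S) (v := v)
  rwa [(componentIn_subset hv).antisymm hS] at hcomp

/-- Some edge of `G` joins `S` to `T`. -/
def Touches (G : SimpleGraph V) (S T : Set V) : Prop :=
  ∃ x ∈ S, ∃ y ∈ T, G.Adj x y

theorem Touches.symm (h : Touches G S T) : Touches G T S :=
  let ⟨x, hx, y, hy, hxy⟩ := h
  ⟨y, hy, x, hx, hxy.symm⟩

theorem Touches.mono {S' T' : Set V} (h : Touches G S T) (hS : S ⊆ S') (hT : T ⊆ T') :
    Touches G S' T' :=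
  let ⟨x, hx, y, hy, hxy⟩ := h
  ⟨x, hS hx, y, hT hy, hxy⟩

theorem Touches.connected_union (h : Touches G S T) (hS : (G.induce S).Connected)
    (hT : (G.induce T).Connected) : (G.induce (S ∪ T)).Connected :=
  let ⟨_, hx, _, hy, hxy⟩ := h
  SimpleGraph.connected_induce_union hS.preconnected hT.preconnected hx hy hxy

theorem touches_componentIn_sdiff (hbT : b ∈ T) (hbU : b ∉ U) (hc : c ∈ componentIn G T b)
    (hc' : c ∉ componentIn G (T \ U) b) : Touches G (componentIn G (T \ U) b) U := by
  by_contra htouch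
  refine hc' (componentIn_subset_of_forall_adj mem_componentIn_self ?_ hc)
  intro x hx y hyT _ hxy
  have hxTU : x ∈ T \ U := componentIn_subset (Set.mem_sdiff b |>.2 ⟨hbT, hbU⟩) hx
  have hyU : y ∉ U := fun hyU => htouch ⟨x, hx, y, hyU, hxy⟩
  exact mem_componentIn_of_adj hx hxTU ⟨hyT, hyU⟩ hxy

end Connectivity

section Minors

variable {U V W : Type*} {F : SimpleGraph U} {G : SimpleGraph V} {H : SimpleGraph W}

theorem connected_induce_biUnion {D : Set V} {B : V → Set W} (hD : (G.induce D).Connected)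
    (hB : ∀ x, (H.induce (B x)).Connected) (hadj : ∀ x y, G.Adj x y → Touches H (B x) (B y)) :
    (H.induce (⋃ x ∈ D, B x)).Connected := by
  obtain ⟨⟨x₀, hx₀⟩⟩ := hD.nonempty
  obtain ⟨⟨z₀, hz₀⟩⟩ := (hB x₀).nonempty
  have hsub : ∀ x ∈ D, B x ⊆ ⋃ x ∈ D, B x := fun x hx => Set.subset_biUnion_of_mem hx
  let K : Set W := componentIn H (⋃ x ∈ D, B x) z₀
  have hreach : componentIn G D x₀ ⊆ {x | x ∈ D ∧ B x ⊆ K} := by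
    refine componentIn_subset_of_forall_adj
      ⟨hx₀, subset_componentIn (hB x₀).preconnected (hsub x₀ hx₀) hz₀⟩ ?_
    rintro x ⟨-, hxK⟩ y hy hx hxy
    obtain ⟨a, ha, b, hb, hab⟩ := hadj x y hxy
    have hbK : b ∈ K := mem_componentIn_of_adj (hxK ha) (hsub x hx ha) (hsub y hy hb) hab
    exact ⟨hy, (subset_componentIn (hB y).preconnected (hsub y hy) hb).trans
      (componentIn_eq hbK).subset⟩
  exact connected_induce_of_subset_componentIn (hsub x₀ hx₀ hz₀) (Set.iUnion₂_subset fun x hx =>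
    (hreach (subset_componentIn hD.preconnected subset_rfl hx₀ hx)).2)

theorem IsMinorOf.trans (hFG : IsMinorOf F G) (hGH : IsMinorOf G H) : IsMinorOf F H := by
  obtain ⟨D, hDdisj, hDne, hDconn, hDadj⟩ := hFG
  obtain ⟨B, hBdisj, hBne, hBconn, hBadj⟩ := hGH
  refine ⟨fun u => ⋃ x ∈ D u, B x, ?_, ?_, ?_, ?_⟩
  · intro u v huv
    refine Set.disjoint_iUnion₂_left.2 fun x hx => Set.disjoint_iUnion₂_right.2 fun y hy => ?_
    exact hBdisj (Set.disjoint_left.1 (hDdisj huv) hx |> fun hxv hxy => hxv (hxy ▸ hy))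
  · intro u
    obtain ⟨x, hx⟩ := hDne u
    exact (hBne x).mono (Set.subset_biUnion_of_mem hx)
  · exact fun u => connected_induce_biUnion (hDconn u) hBconn hBadj
  · intro u v huv
    obtain ⟨x, hx, y, hy, hxy⟩ := hDadj u v huv
    exact Touches.mono (hBadj x y hxy) (Set.subset_biUnion_of_mem hx)
      (Set.subset_biUnion_of_mem hy)

/-- `G` has no `K₃,₃` minor. -/
def K33MinorFree (G : SimpleGraph V) : Prop :=
  ¬ IsMinorOf (completeBipartiteGraph (Fin 3) (Fin 3)) G

theorem K33MinorFree.of_isMinorOf (hH : K33MinorFree H) (hGH : IsMinorOf G H) :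
    K33MinorFree G :=
  fun hK => hH (hK.trans hGH)

theorem K33MinorFree.false_of_touches (hG : K33MinorFree G) (X Y : Fin 3 → Set V)
    (hX : ∀ i, (G.induce (X i)).Connected) (hY : ∀ i, (G.induce (Y i)).Connected)
    (hdisj : (List.ofFn X ++ List.ofFn Y).Pairwise Disjoint)
    (htouch : ∀ i j, Touches G (X i) (Y j)) : False := by
  simp only [List.pairwise_append, List.pairwise_ofFn, List.forall_mem_ofFn_iff] at hdisj
  obtain ⟨hXX, hYY, hXY⟩ := hdisj
  refine hG ⟨Sum.elim X Y, ?_, ?_, ?_, ?_⟩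
  · rintro (i | i) (j | j) hij
    · rcases (show i ≠ j by simpa using hij).lt_or_gt with hlt | hlt
      exacts [hXX hlt, (hXX hlt).symm]
    · exact hXY i j
    · exact (hXY j i).symm
    · rcases (show i ≠ j by simpa using hij).lt_or_gt with hlt | hlt
      exacts [hYY hlt, (hYY hlt).symm]
  · rintro (i | i)
    exacts [Set.nonempty_coe_sort.1 (hX i).nonempty, Set.nonempty_coe_sort.1 (hY i).nonempty]
  · rintro (i | i)
    exacts [hX i, hY i]
  · rintro (i | i) (j | j) hij
    · simp at hij
    · exact htouch i j
    · exact (htouch j i).symm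
    · simp at hij

end Minors

section Geodesics

variable {V : Type*} {H : SimpleGraph V} {a b z : V}

theorem length_takeUntil_eq_dist {p : H.Walk a b} (hp : p.length = H.dist a b)
    (hz : z ∈ p.support) : (p.takeUntil z hz).length = H.dist a z :=
  SimpleGraph.length_eq_dist_of_subwalk hp (p.isSubwalk_takeUntil hz)

theorem length_dropUntil_eq_dist {p : H.Walk a b} (hp : p.length = H.dist a b)
    (hz : z ∈ p.support) : (p.dropUntil z hz).length = H.dist z b :=
  SimpleGraph.length_eq_dist_of_subwalk hp (p.isSubwalk_dropUntil hz)

theorem getVert_dist_eq {p : H.Walk a b} (hp : p.length = H.dist a b) (hz : z ∈ p.support) :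
    p.getVert (H.dist a z) = z := by
  rw [← length_takeUntil_eq_dist hp hz, p.getVert_length_takeUntil hz]

theorem injOn_dist_support {p : H.Walk a b} (hp : p.length = H.dist a b) :
    Set.InjOn (H.dist a) {z | z ∈ p.support} := fun z hz z' hz' h => by
  rw [← getVert_dist_eq hp hz, h, getVert_dist_eq hp hz']

theorem dist_append_eq {x y : V} {p : H.Walk a b} {q : H.Walk x b} (hp : p.length = H.dist a b)
    (hq : q.length = H.dist x b) (hyp : y ∈ p.support) (hyq : y ∈ q.support) :
    ((q.takeUntil y hyq).append (p.dropUntil y hyp)).length = H.dist x b := by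
  rw [SimpleGraph.Walk.length_append, length_dropUntil_eq_dist hp hyp,
    ← length_dropUntil_eq_dist hq hyq, ← SimpleGraph.Walk.length_append, q.take_spec hyq, hq]

theorem support_dropLast_eq_sdiff {p : H.Walk a b} (hp : p.IsPath) (hab : a ≠ b) :
    {z | z ∈ p.dropLast.support} = {z | z ∈ p.support} \ {b} := by
  have hnil : ¬ p.Nil := SimpleGraph.Walk.not_nil_of_ne hab
  have hnodup : (p.support.dropLast ++ [b]).Nodup := by
    rw [p.dropLast_support_concat]
    exact hp.support_nodup
  ext z
  rw [SimpleGraph.Walk.support_dropLast hnil]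
  simp only [Set.mem_sdiff, Set.mem_ofPred_eq, Set.mem_singleton_iff]
  rw [← p.dropLast_support_concat]
  simp only [List.nodup_append, List.mem_singleton] at hnodup
  simp only [List.dropLast_concat, List.mem_append, List.mem_singleton]
  grind

theorem support_append_eq_sdiff_union {c : V} (p : H.Walk a b) (q : H.Walk b c) :
    {z | z ∈ (p.append q).support} = {z | z ∈ p.support} \ {b} ∪ {z | z ∈ q.support} := by
  have hb : b ∈ q.support := q.start_mem_support
  ext z
  simp only [SimpleGraph.Walk.mem_support_append_iff, Set.mem_union, Set.mem_sdiff,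
    Set.mem_ofPred_eq, Set.mem_singleton_iff]
  grind

theorem connected_support_sdiff {G : SimpleGraph V} {S : Set V} {p : (restrictTo G S).Walk a b}
    (hp : p.IsPath) (hab : a ≠ b) : (G.induce ({z | z ∈ p.support} \ {b})).Connected := by
  rw [← support_dropLast_eq_sdiff hp hab]
  exact connected_induce_support _

theorem support_sdiff_touches {G : SimpleGraph V} {S T : Set V} {p : (restrictTo G S).Walk a b}
    (hp : p.IsPath) (hab : a ≠ b) (hb : b ∈ T) : Touches G ({z | z ∈ p.support} \ {b}) T := by
  rw [← support_dropLast_eq_sdiff hp hab]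
  exact ⟨_, p.dropLast.end_mem_support, b, hb,
    restrictTo_le (SimpleGraph.Walk.adj_penultimate (SimpleGraph.Walk.not_nil_of_ne hab))⟩

end Geodesics

section Crossings

variable {V : Type*} {G : SimpleGraph V} {u w x b₀ : V} {A B C P : Set V}

/-- The inner vertex set `A` of a path or connected piece linking `u` to `w`; it is empty when the
link is the edge `uw`. -/
def IsArc (G : SimpleGraph V) (u w : V) (A : Set V) : Prop :=
  (A = ∅ ∧ G.Adj u w) ∨ ((G.induce A).Connected ∧ Touches G {u} A ∧ Touches G {w} A)

theorem IsArc.symm (h : IsArc G u w A) : IsArc G w u A :=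
  h.imp (And.imp_right SimpleGraph.Adj.symm) (And.imp_right And.symm)

theorem IsArc.of_mem (h : IsArc G u w A) (hx : x ∈ A) :
    (G.induce A).Connected ∧ Touches G {u} A ∧ Touches G {w} A :=
  h.resolve_left fun hA => Set.notMem_empty x (hA.1 ▸ hx)

theorem IsArc.connected_insert (h : IsArc G u w A) : (G.induce (insert w A)).Connected := by
  rcases h with ⟨rfl, -⟩ | ⟨hA, -, hw⟩
  · rw [insert_empty_eq]
    simp
  · exact hw.connected_union (by simp) hA

theorem IsArc.touches_insert (h : IsArc G u w A) : Touches G (insert w A) {u} := by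
  rcases h with ⟨rfl, huw⟩ | ⟨-, hu, -⟩
  · exact ⟨w, Set.mem_insert w ∅, u, rfl, huw.symm⟩
  · exact hu.symm.mono (Set.subset_insert w A) subset_rfl

/-- A region `C` facing two arcs `A` and `B` with common ends `u` and `w`, all pairwise disjoint. -/
structure IsTheta (G : SimpleGraph V) (u w : V) (A B C : Set V) : Prop where
  connected : (G.induce C).Connected
  arc_left : IsArc G u w A
  arc_right : IsArc G u w B
  ends_ne : u ≠ w
  ends_notMem : u ∉ A ∪ B ∧ w ∉ A ∪ B
  arcs_disjoint : Disjoint A B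
  region_disjoint : Disjoint (insert u (insert w (A ∪ B))) C

theorem IsTheta.symm (h : IsTheta G u w A B C) : IsTheta G w u A B C where
  connected := h.connected
  arc_left := h.arc_left.symm
  arc_right := h.arc_right.symm
  ends_ne := h.ends_ne.symm
  ends_notMem := h.ends_notMem.symm
  arcs_disjoint := h.arcs_disjoint
  region_disjoint := Set.insert_comm u w _ ▸ h.region_disjoint

/-- `P` is the vertex set of a shortest path inside `C` from a neighbour of `u` to a neighbour
of `w`. -/
def IsCrossing (G : SimpleGraph V) (C : Set V) (u w : V) (P : Set V) : Prop :=
  ∃ a ∈ C, ∃ b ∈ C, G.Adj u a ∧ G.Adj w b ∧ ∃ p : (restrictTo G C).Walk a b,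
    p.length = (restrictTo G C).dist a b ∧ {z | z ∈ p.support} = P

theorem IsCrossing.symm (h : IsCrossing G C u w P) : IsCrossing G C w u P := by
  obtain ⟨a, ha, b, hb, hua, hwb, p, hp, rfl⟩ := h
  exact ⟨b, hb, a, ha, hwb, hua, p.reverse, by rw [p.length_reverse, hp, SimpleGraph.dist_comm],
    by simp⟩

theorem IsCrossing.connected (h : IsCrossing G C u w P) : (G.induce P).Connected := by
  obtain ⟨a, -, b, -, -, -, p, -, rfl⟩ := h
  exact connected_induce_support p

theorem IsCrossing.subset (h : IsCrossing G C u w P) : P ⊆ C := by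
  obtain ⟨a, ha, b, -, -, -, p, -, rfl⟩ := h
  exact support_subset_of_mem p ha

theorem IsCrossing.touches_left (h : IsCrossing G C u w P) : Touches G {u} P := by
  obtain ⟨a, -, b, -, hua, -, p, -, rfl⟩ := h
  exact ⟨u, rfl, a, p.start_mem_support, hua⟩

theorem exists_isCrossing (hC : (G.induce C).Connected) (hu : Touches G {u} C)
    (hw : Touches G {w} C) : ∃ P, IsCrossing G C u w P := by
  obtain ⟨_, rfl, a, ha, hua⟩ := hu
  obtain ⟨_, rfl, b, hb, hwb⟩ := hw
  obtain ⟨p, hp⟩ := (reachable_restrictTo hC.preconnected ha hb).exists_walk_length_eq_dist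
  exact ⟨_, a, ha, b, hb, hua, hwb, p, hp, rfl⟩

/-- Follow a shortest path from the new starting vertex `x` until it first meets `P`. -/
theorem IsCrossing.exists_reroute (hP : IsCrossing G C u w P) (hC : (G.induce C).Connected)
    (hxC : x ∈ C) (hxP : x ∉ P) (hux : G.Adj u x) :
    ∃ U U' Y : Set V, P = U ∪ Y ∧ IsCrossing G C u w (U' ∪ Y) ∧ x ∈ U' ∧
      Disjoint U Y ∧ Disjoint U' P ∧ (G.induce Y).Connected ∧ Touches G {w} Y ∧
      (U.Nonempty → (G.induce U).Connected ∧ Touches G {u} U ∧ Touches G U Y) ∧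
      (G.induce U').Connected ∧ Touches G U' Y := by
  obtain ⟨a, -, b, hb, hua, hwb, p, hp, rfl⟩ := hP
  obtain ⟨q, hq⟩ := (reachable_restrictTo hC.preconnected hxC hb).exists_walk_length_eq_dist
  obtain ⟨y, hyp, hyq, hfirst⟩ := q.exists_mem_support_forall_mem_support_imp_eq
    p.support.toFinset ⟨b, by simp⟩
  simp only [List.mem_toFinset] at hyp hfirst
  have hxy : x ≠ y := fun h => hxP (h ▸ hyp)
  have hpath : p.IsPath := p.isPath_of_length_eq_dist hp
  have htouch : y ∈ {z | z ∈ (p.dropUntil y hyp).support} :=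
    (p.dropUntil y hyp).start_mem_support
  have hpathr : (q.takeUntil y hyq).IsPath := (q.isPath_of_length_eq_dist hq).takeUntil hyq
  refine ⟨{z | z ∈ (p.takeUntil y hyp).support} \ {y},
    {z | z ∈ (q.takeUntil y hyq).support} \ {y}, {z | z ∈ (p.dropUntil y hyp).support},
    ?_, ⟨x, hxC, b, hb, hux, hwb, (q.takeUntil y hyq).append (p.dropUntil y hyp),
      dist_append_eq hp hq hyp hyq, ?_⟩, ⟨SimpleGraph.Walk.start_mem_support _, hxy⟩, ?_, ?_,
    connected_induce_support _, ⟨w, rfl, b, SimpleGraph.Walk.end_mem_support _, hwb⟩, ?_, ?_,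
    support_sdiff_touches hpathr hxy htouch⟩
  · rw [← support_append_eq_sdiff_union, p.take_spec]
  · rw [support_append_eq_sdiff_union]
  · refine Set.disjoint_left.2 fun z ⟨hz, hzy⟩ hz' => ?_
    exact (p.take_spec hyp ▸ hpath).ne_of_mem_support_of_append hzy hz hz' rfl
  · exact Set.disjoint_left.2 fun z ⟨hz, hzy⟩ hz' => hzy (hfirst z hz' hz)
  · rintro ⟨z, hz, hzy⟩
    have hay : a ≠ y := by
      rintro rfl
      exact hzy (by simpa using hz)
    have hpathl : (p.takeUntil y hyp).IsPath := hpath.takeUntil hyp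
    exact ⟨connected_support_sdiff hpathl hay,
      ⟨u, rfl, a, ⟨SimpleGraph.Walk.start_mem_support _, hay⟩, hua⟩,
      support_sdiff_touches hpathl hay htouch⟩
  · exact connected_support_sdiff hpathr hxy

theorem IsTheta.false_of_two_branches {U U' Y D : Set V} (hG : K33MinorFree G)
    (h : IsTheta G u w A B C) (hU : (G.induce U).Connected) (hU' : (G.induce U').Connected)
    (hY : (G.induce Y).Connected) (hD : (G.induce D).Connected) (hUC : U ⊆ C) (hU'C : U' ⊆ C)
    (hYC : Y ⊆ C) (hDsub : D ⊆ (B ∪ C) \ (U ∪ U' ∪ Y)) (hBD : B ⊆ D)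
    (hdUY : Disjoint U Y) (hdU' : Disjoint U' (U ∪ Y)) (hB : Touches G {u} B ∧ Touches G {w} B)
    (huU : Touches G U {u}) (huU' : Touches G U' {u}) (hUY : Touches G U Y)
    (hU'Y : Touches G U' Y) (hwY : Touches G {w} Y) (hDU : Touches G D U)
    (hDU' : Touches G D U') : False := by
  refine hG.false_of_touches ![U, U', insert w A] ![{u}, Y, D] ?_ ?_ ?_ ?_
  · intro i
    fin_cases i
    exacts [hU, hU', h.arc_left.connected_insert]
  · intro i
    fin_cases i
    exacts [show (G.induce {u}).Connected by simp, hY, hD]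
  · obtain ⟨-, -, -, hne, ⟨hu, hw⟩, harcs, hregion⟩ := h
    change [U, U', insert w A, {u}, Y, D].Pairwise Disjoint
    simp only [List.pairwise_cons, List.mem_cons, List.not_mem_nil, or_false, forall_eq_or_imp,
      forall_eq, Set.disjoint_left] at hdUY hdU' harcs hregion ⊢
    and_intros <;> grind
  · have hwA : {w} ⊆ insert w A := by simp
    intro i j
    fin_cases i <;> fin_cases j
    exacts [huU, hUY, hDU.symm, huU', hU'Y, hDU'.symm, h.arc_left.touches_insert,
      hwY.mono hwA subset_rfl, hB.2.mono hwA hBD]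

theorem IsTheta.exists_crossing_ssubset (hG : K33MinorFree G) (h : IsTheta G u w A B C)
    (hb₀ : b₀ ∈ B) (hP : IsCrossing G C u w P) (hxC : x ∈ C) (hxP : x ∉ P) (hux : G.Adj u x)
    (hx : x ∈ componentIn G ((B ∪ C) \ P) b₀) :
    ∃ P', IsCrossing G C u w P' ∧
      componentIn G ((B ∪ C) \ P') b₀ ⊂ componentIn G ((B ∪ C) \ P) b₀ := by
  obtain ⟨U, U', Y, rfl, hP', hxU', hUY, hU'P, hY, hwY, hU, hU', hU'Y⟩ :=
    hP.exists_reroute h.connected hxC hxP hux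
  obtain ⟨hUC, hYC⟩ := Set.union_subset_iff.1 hP.subset
  obtain ⟨hU'C, -⟩ := Set.union_subset_iff.1 hP'.subset
  obtain ⟨hB, huB, hwB⟩ := h.arc_right.of_mem hb₀
  have hBC : ∀ z ∈ B, z ∉ C := fun z hz =>
    Set.disjoint_left.1 h.region_disjoint (by simp [hz])
  have hb₀T : ∀ X ⊆ C, b₀ ∈ (B ∪ C) \ X := fun X hX => ⟨Or.inl hb₀, fun hz => hBC b₀ hb₀ (hX hz)⟩
  set D := componentIn G ((B ∪ C) \ (U ∪ U' ∪ Y)) b₀ with hD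
  have hDsub : D ⊆ (B ∪ C) \ (U ∪ U' ∪ Y) :=
    componentIn_subset (hb₀T _ (by simp [hUC, hU'C, hYC]))
  have hDU' : Touches G D U' := by
    have hsets : ((B ∪ C) \ (U ∪ Y)) \ U' = (B ∪ C) \ (U ∪ U' ∪ Y) := by
      rw [Set.sdiff_sdiff, Set.union_right_comm]
    have hxD : x ∉ D := fun hz => (hDsub hz).2 (Or.inl (Or.inr hxU'))
    rw [hD, ← hsets] at hxD ⊢
    exact touches_componentIn_sdiff (hb₀T _ hP.subset) (fun hz => hBC b₀ hb₀ (hU'C hz)) hx hxD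
  by_cases hDU : Touches G D U
  · obtain ⟨_, -, y, hy, -⟩ := id hDU
    obtain ⟨hUc, huU, hUY'⟩ := hU ⟨y, hy⟩
    have hBD : B ⊆ D := subset_componentIn hB.preconnected
      (fun z hz => ⟨Or.inl hz, fun hz' => hBC z hz (by grind)⟩) hb₀
    exact (h.false_of_two_branches hG hUc hU' hY connected_componentIn hUC hU'C hYC hDsub hBD
      hUY hU'P ⟨huB, hwB⟩ huU.symm
      ⟨x, hxU', u, rfl, hux.symm⟩ hUY' hU'Y hwY hDU hDU').elim
  · refine ⟨U' ∪ Y, hP', ?_, fun hsub => ?_⟩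
    · have hsets : ((B ∪ C) \ (U' ∪ Y)) \ U = (B ∪ C) \ (U ∪ U' ∪ Y) := by
        rw [Set.sdiff_sdiff, Set.union_comm (U' ∪ Y), ← Set.union_assoc]
      rw [hD, ← hsets] at hDU
      intro c hc
      by_contra hcP
      refine hDU (touches_componentIn_sdiff (hb₀T _ hP'.subset)
        (fun hz => hBC b₀ hb₀ (hUC hz)) hc fun hcD => hcP ?_)
      exact componentIn_mono (by grind) hcD
    · exact (componentIn_subset (hb₀T _ hP'.subset) (hsub hx)).2 (Or.inl hxU')

theorem IsTheta.false_of_touches_arcs {D : Set V} (hG : K33MinorFree G) (h : IsTheta G u w A B C)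
    (hP : IsCrossing G C u w P) (hD : (G.induce D).Connected) (hDsub : D ⊆ C \ P)
    (hDA : Touches G D A) (hDB : Touches G D B) (hDP : Touches G D P) : False := by
  obtain ⟨_, -, x, hx, -⟩ := id hDA
  obtain ⟨_, -, y, hy, -⟩ := id hDB
  obtain ⟨hA, huA, hwA⟩ := h.arc_left.of_mem hx
  obtain ⟨hB, huB, hwB⟩ := h.arc_right.of_mem hy
  refine hG.false_of_touches ![{u}, {w}, D] ![A, B, P] ?_ ?_ ?_ ?_
  · intro i
    fin_cases i
    exacts [show (G.induce {u}).Connected by simp, show (G.induce {w}).Connected by simp, hD]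
  · intro i
    fin_cases i
    exacts [hA, hB, hP.connected]
  · have hPC := hP.subset
    obtain ⟨-, -, -, hne, ⟨hu, hw⟩, harcs, hregion⟩ := h
    change [{u}, {w}, D, A, B, P].Pairwise Disjoint
    simp only [List.pairwise_cons, List.mem_cons, List.not_mem_nil, or_false, forall_eq_or_imp,
      forall_eq, Set.disjoint_left, Set.mem_insert_iff, Set.mem_union, not_or]
      at hu hw harcs hregion ⊢
    and_intros <;> grind
  · intro i j
    fin_cases i <;> fin_cases j
    exacts [huA, huB, hP.touches_left, hwA, hwB, hP.symm.touches_left, hDA, hDB, hDP]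

/-- Among all shortest crossings take one minimizing the component around `B`: a component of
`C \ P` facing `B` that also saw `u` or `w` would allow a reroute making that component smaller. -/
theorem IsTheta.exists_crossing [Finite V] (hG : K33MinorFree G) (h : IsTheta G u w A B C)
    (hu : Touches G {u} C) (hw : Touches G {w} C) :
    ∃ P, IsCrossing G C u w P ∧ ∀ v ∈ C \ P, Touches G (componentIn G (C \ P) v) B →
      ¬ Touches G (componentIn G (C \ P) v) (insert u (insert w A)) := by
  rcases B.eq_empty_or_nonempty with rfl | ⟨b₀, hb₀⟩
  · obtain ⟨P, hP⟩ := exists_isCrossing h.connected hu hw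
    exact ⟨P, hP, fun v _ ⟨_, _, _, hy, _⟩ => hy.elim⟩
  have hBC : ∀ z ∈ B, z ∉ C := fun z hz =>
    Set.disjoint_left.1 h.region_disjoint (by simp [hz])
  obtain ⟨P, hP, hmin⟩ := exists_minimalFor_of_wellFoundedLT (IsCrossing G C u w)
    (fun P => componentIn G ((B ∪ C) \ P) b₀) (exists_isCrossing h.connected hu hw)
  refine ⟨P, hP, fun v hv hDB => ?_⟩
  set D := componentIn G (C \ P) v
  have hDsub : D ⊆ C \ P := componentIn_subset hv
  have hDside : D ⊆ componentIn G ((B ∪ C) \ P) b₀ := by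
    obtain ⟨d, hd, b, hb, hdb⟩ := hDB
    have hBsub : B ⊆ (B ∪ C) \ P := fun z hz => ⟨Or.inl hz, fun hzP => hBC z hz (hP.subset hzP)⟩
    have hDsub' : D ⊆ (B ∪ C) \ P := fun z hz => ⟨Or.inr (hDsub hz).1, (hDsub hz).2⟩
    have hbside := subset_componentIn (h.arc_right.of_mem hb).1.preconnected hBsub hb₀ hb
    have hdside := mem_componentIn_of_adj hbside (hBsub hb) (hDsub' hd) hdb.symm
    rw [← componentIn_eq hdside]
    exact subset_componentIn connected_componentIn.preconnected hDsub' hd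
  have hDP : Touches G D P := by
    obtain ⟨_, -, y, hy, -⟩ := hP.touches_left
    refine touches_componentIn_sdiff hv.1 hv.2
      (reachable_restrictTo h.connected.preconnected hv.1 (hP.subset hy)) fun hyD => ?_
    exact (hDsub hyD).2 hy
  rintro ⟨x, hx, y, rfl | rfl | hy, hxy⟩
  · obtain ⟨P', hP', hlt⟩ := h.exists_crossing_ssubset hG hb₀ hP (hDsub hx).1 (hDsub hx).2
      hxy.symm (hDside hx)
    exact hlt.not_subset (hmin hP' hlt.subset)
  · obtain ⟨P', hP', hlt⟩ := h.symm.exists_crossing_ssubset hG hb₀ hP.symm (hDsub hx).1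
      (hDsub hx).2 hxy.symm (hDside hx)
    exact hlt.not_subset (hmin hP'.symm hlt.subset)
  · exact h.false_of_touches_arcs hG hP connected_componentIn hDsub ⟨x, hx, y, hy, hxy⟩ hDB hDP

end Crossings

section Colouring

variable {V κ : Type*} {G : SimpleGraph V} {m : ℕ} {C P N N' : Set V} {col col' : V → κ}
  {rk : V → ℕ} {v : V}

/-- The colour of `v` does not occur on `N` and, when at least three colours per block are
available (`2 < m`), `N` is rainbow. Running one induction with the parameter `m` yields both proper
`6`-colourings (`m = 2`) and acyclic `9`-colourings (`m = 3`). -/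
def IsCleanAt (m : ℕ) (col : V → κ) (v : V) (N : Set V) : Prop :=
  col v ∉ col '' N ∧ (2 < m → Set.InjOn col N)

theorem IsCleanAt.mono (h : IsCleanAt m col v N) (hN : N' ⊆ N) : IsCleanAt m col v N' :=
  ⟨fun hv => h.1 (Set.image_mono hN hv), fun hm => (h.2 hm).mono hN⟩

theorem IsCleanAt.congr (h : IsCleanAt m col v N) (hcol : Set.EqOn col' col (insert v N)) :
    IsCleanAt m col' v N := by
  have hN : Set.EqOn col' col N := hcol.mono (Set.subset_insert v N)
  refine ⟨?_, fun hm => (h.2 hm).congr hN.symm⟩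
  rw [hN.image_eq, hcol (Set.mem_insert v N)]
  exact h.1

/-- The neighbours of `v` that are coloured no later than `v` when `C` is coloured in the order
`rk` after everything else. Ties are allowed: the vertices of a crossing share a rank. -/
def backNeighbors (G : SimpleGraph V) (C : Set V) (rk : V → ℕ) (v : V) : Set V :=
  {z | G.Adj v z ∧ (z ∈ C → rk z ≤ rk v)}

/-- The colouring `col` outside `C` extends to `C`, cleanly for some order on `C`. -/
def Extendable (G : SimpleGraph V) (m : ℕ) (C : Set V) (col : V → κ) : Prop :=
  ∃ (col' : V → κ) (rk : V → ℕ), Set.EqOn col' col Cᶜ ∧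
    ∀ v ∈ C, IsCleanAt m col' v (backNeighbors G C rk v)

theorem extendable_of_components (h : ∀ v ∈ C, Extendable G m (componentIn G C v) col) :
    Extendable G m C col := by
  have hchoice (D : Set V) : ∃ (c : V → κ) (r : V → ℕ), Extendable G m D col →
      Set.EqOn c col Dᶜ ∧ ∀ v ∈ D, IsCleanAt m c v (backNeighbors G D r v) := by
    by_cases hD : Extendable G m D col
    · obtain ⟨c, r, h⟩ := hD
      exact ⟨c, r, fun _ => h⟩
    · exact ⟨col, 0, fun hD' => absurd hD' hD⟩
  choose c r hcr using hchoice
  refine ⟨fun z => if z ∈ C then c (componentIn G C z) z else col z,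
    fun z => r (componentIn G C z) z, fun z hz => if_neg hz, fun v hv => ?_⟩
  obtain ⟨hoff, hclean⟩ := hcr _ (h v hv)
  have hsame : ∀ z ∈ C, G.Adj v z → componentIn G C z = componentIn G C v := fun z hz hvz =>
    componentIn_eq (mem_componentIn_of_adj mem_componentIn_self hv hz hvz)
  refine ((hclean v mem_componentIn_self).mono ?_).congr ?_
  · rintro z ⟨hvz, hz⟩
    refine ⟨hvz, fun hzD => ?_⟩
    have hzC := componentIn_subset hv hzD
    simpa only [hsame z hzC hvz] using hz hzC
  · rintro z (rfl | ⟨hvz, -⟩)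
    · simp only [if_pos hv]
    · by_cases hz : z ∈ C
      · simp only [if_pos hz, hsame z hz hvz]
      · simp only [if_neg hz]
        exact (hoff fun hzD => hz (componentIn_subset hv hzD)).symm

theorem extendable_of_sdiff (hPC : P ⊆ C) (hcol : Set.EqOn col' col Pᶜ)
    (hP : ∀ v ∈ P, IsCleanAt m col' v (G.neighborSet v \ (C \ P)))
    (h : Extendable G m (C \ P) col') : Extendable G m C col := by
  obtain ⟨c, r, hc, hclean⟩ := h
  refine ⟨c, fun z => if z ∈ P then 0 else r z + 1, fun z hz => ?_, fun v hv => ?_⟩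
  · have hzP : z ∉ P := fun hzP => hz (hPC hzP)
    rw [hc fun hz' => hz hz'.1, hcol hzP]
  · by_cases hvP : v ∈ P
    · have hback : ∀ z ∈ backNeighbors G C (fun z => if z ∈ P then 0 else r z + 1) v,
          z ∈ G.neighborSet v \ (C \ P) := by
        rintro z ⟨hvz, hz⟩
        refine ⟨hvz, fun ⟨hzC, hzP⟩ => ?_⟩
        simpa [hvP, hzP] using hz hzC
      refine ((hP v hvP).mono hback).congr ?_
      rintro z (rfl | hz)
      exacts [hc fun hv' => hv'.2 hvP, hc (hback z hz).2]
    · refine (hclean v ⟨hv, hvP⟩).mono fun z ⟨hvz, hz⟩ => ⟨hvz, fun hz' => ?_⟩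
      simpa [hvP, hz'.2] using hz hz'.1

/-- The vertices outside `C` with a neighbour in `C`. -/
def boundary (G : SimpleGraph V) (C : Set V) : Set V :=
  {z | z ∉ C ∧ ∃ v ∈ C, G.Adj v z}

theorem boundary_componentIn_subset (hv : v ∈ C \ P) :
    boundary G (componentIn G (C \ P) v) ⊆ P ∪ boundary G C := by
  rintro z ⟨hz, y, hy, hyz⟩
  have hyC := componentIn_subset hv hy
  by_cases hzP : z ∈ P
  · exact Or.inl hzP
  · exact Or.inr ⟨fun hzC => hz (mem_componentIn_of_adj hy hyC ⟨hzC, hzP⟩ hyz), y, hyC.1, hyz⟩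

theorem componentIn_sdiff_ssubset (hPC : P ⊆ C) (hP : P.Nonempty) (hv : v ∈ C \ P) :
    componentIn G (C \ P) v ⊂ C :=
  (componentIn_subset hv).trans_ssubset (hPC.sdiff_ssubset_of_nonempty hP)

/-- `col'` recolours the vertex set `P` of a path inside `C` with a fresh block of at most `m`
colours, keeping the neighbourhoods of the vertices of `C` clean. -/
structure IsPathColoring (G : SimpleGraph V) (m : ℕ) (C P : Set V) (col col' : V → κ) : Prop where
  eqOn : Set.EqOn col' col Pᶜ
  ncard_le : (col' '' P).ncard ≤ m
  proper : ∀ v ∈ P, col' v ∉ col' '' (G.neighborSet v \ (C \ P))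
  rainbow : 2 < m → ∀ v ∈ C, Set.InjOn col' (G.neighborSet v \ (C \ P))

theorem IsPathColoring.extendable (h : IsPathColoring G m C P col col') (hPC : P ⊆ C)
    (hC : ∀ v ∈ C \ P, Extendable G m (componentIn G (C \ P) v) col') : Extendable G m C col :=
  extendable_of_sdiff hPC h.eqOn
    (fun v hv => ⟨h.proper v hv, fun hm => h.rainbow hm v (hPC hv)⟩) (extendable_of_components hC)

theorem exists_embedding_disjoint [Fintype κ] (S : Set κ) (h : S.ncard + m ≤ Fintype.card κ) :
    ∃ f : Fin m ↪ κ, ∀ i, f i ∉ S := by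
  have hcard : Fintype.card (Fin m) ≤ S.toFinsetᶜ.card := by
    rw [Finset.card_compl, Fintype.card_fin, ← Set.ncard_eq_toFinset_card']
    omega
  obtain ⟨f, hf⟩ := Function.Embedding.exists_of_card_le_finset hcard
  exact ⟨f, fun i => by simpa using hf ⟨i, rfl⟩⟩

/-- Label a vertex by its distance from `a` modulo `m`: neighbours of a vertex of `C` on the
shortest path are at distance at most two from each other. -/
theorem exists_fin_labeling_of_length_eq_dist {a b : V} (hm : 2 ≤ m) (ha : a ∈ C)
    {p : (restrictTo G C).Walk a b} (hp : p.length = (restrictTo G C).dist a b) :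
    ∃ f : V → Fin m, (∀ v ∈ p.support, ∀ z ∈ p.support, G.Adj v z → f v ≠ f z) ∧
      (2 < m → ∀ v ∈ C, Set.InjOn f (G.neighborSet v ∩ {z | z ∈ p.support})) := by
  set d := (restrictTo G C).dist a
  have hPC := support_subset_of_mem p ha
  have hadj : ∀ v ∈ C, ∀ z ∈ p.support, G.Adj v z → d v ≤ d z + 1 ∧ d z ≤ d v + 1 := by
    intro v hv z hz hvz
    have hdist : d z = d v ∨ d z = d v + 1 ∨ d z = d v - 1 :=
      (restrictTo_adj.2 ⟨hv, hPC hz, hvz⟩).diff_dist_adj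
    omega
  have hclose : ∀ y ∈ p.support, ∀ z ∈ p.support, d y < d z + m → d z < d y + m →
      d y % m = d z % m → y = z := fun y hy z hz hyz hzy h => by
    have hmod : d y ≡ d z [MOD m] := h
    exact injOn_dist_support hp hy hz (hmod.eq_of_abs_lt (by rw [abs_lt]; omega))
  refine ⟨fun z => ⟨d z % m, Nat.mod_lt _ (by omega)⟩, fun v hv z hz hvz h => ?_, ?_⟩
  · have := hadj v (hPC hv) z hz hvz
    exact hvz.ne (hclose v hv z hz (by omega) (by omega) (congrArg Fin.val h))
  · rintro hm3 v hv y ⟨hvy, hy⟩ z ⟨hvz, hz⟩ h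
    have := hadj v hv y hy hvy
    have := hadj v hv z hz hvz
    exact hclose y hy z hz (by omega) (by omega) (congrArg Fin.val h)

theorem exists_isPathColoring [Fintype κ] {a b : V} (hm : 2 ≤ m)
    (hbd : (col '' boundary G C).ncard + m ≤ Fintype.card κ)
    (hrb : 2 < m → ∀ v ∈ C, Set.InjOn col (G.neighborSet v \ C)) (ha : a ∈ C)
    {p : (restrictTo G C).Walk a b} (hp : p.length = (restrictTo G C).dist a b) :
    ∃ col', IsPathColoring G m C {z | z ∈ p.support} col col' := by
  obtain ⟨f, hproper, hinj⟩ := exists_fin_labeling_of_length_eq_dist hm ha hp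
  obtain ⟨e, he⟩ := exists_embedding_disjoint (m := m) (col '' boundary G C) hbd
  have hPC := support_subset_of_mem p ha
  set P := {z | z ∈ p.support}
  let col' : V → κ := fun z => if z ∈ P then e (f z) else col z
  have honP : ∀ z ∈ P, col' z = e (f z) := fun z hz => if_pos hz
  have hoffP : ∀ z ∉ P, col' z = col z := fun z hz => if_neg hz
  have hfresh : ∀ v ∈ C, ∀ y ∈ P, ∀ z ∉ C, G.Adj v z → col' y ≠ col' z := by
    intro v hv y hy z hz hvz h
    rw [honP y hy, hoffP z fun hzP => hz (hPC hzP)] at h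
    exact he (f y) ⟨z, ⟨hz, v, hv, hvz⟩, h.symm⟩
  refine ⟨col', hoffP, ?_, ?_, ?_⟩
  · calc (col' '' P).ncard ≤ (Set.range e).ncard :=
          Set.ncard_le_ncard (Set.image_subset_iff.2 fun z hz => ⟨_, (honP z hz).symm⟩)
      _ ≤ m := by simp [Set.ncard_range_of_injective e.injective]
  · rintro v hv ⟨z, ⟨hvz, hz⟩, h⟩
    by_cases hzP : z ∈ P
    · rw [honP v hv, honP z hzP] at h
      exact hproper v hv z hzP hvz (e.injective h).symm
    · exact hfresh v (hPC hv) v hv z (fun hzC => hz ⟨hzC, hzP⟩) hvz h.symm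
  · rintro hm3 v hv y ⟨hvy, hy⟩ z ⟨hvz, hz⟩ h
    by_cases hyP : y ∈ P <;> by_cases hzP : z ∈ P
    · rw [honP y hyP, honP z hzP] at h
      exact hinj hm3 v hv ⟨hvy, hyP⟩ ⟨hvz, hzP⟩ (e.injective h)
    · exact (hfresh v hv y hyP z (fun hzC => hz ⟨hzC, hzP⟩) hvz h).elim
    · exact (hfresh v hv z hzP y (fun hyC => hy ⟨hyC, hyP⟩) hvy h.symm).elim
    · rw [hoffP y hyP, hoffP z hzP] at h
      exact hrb hm3 v hv ⟨hvy, fun hyC => hy ⟨hyC, hyP⟩⟩ ⟨hvz, fun hzC => hz ⟨hzC, hzP⟩⟩ h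

end Colouring

section Frames

variable {V κ : Type*} {G : SimpleGraph V} {m : ℕ} {C P : Set V} {col col' : V → κ}
  {u v w : V} {α β l : List V}

/-- A connected region `C`, all of whose outside neighbours lie on the closed walk `α ++ β`, an arc
`α` followed by an arc `β`; the outside neighbours on each arc carry at most `m` colours. If one of
the arcs is empty, the other one need not close up. This is the state of the colouring procedure
when it is about to colour `C`. -/
structure Frame (G : SimpleGraph V) (m : ℕ) (C : Set V) (col : V → κ) (α β : List V) : Prop where
  connected : (G.induce C).Connected
  isChain : (α ++ β).IsChain G.Adj
  isChain_swap : (β ++ α).IsChain G.Adj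
  nodup : (α ++ β).Nodup
  notMem : ∀ z ∈ α ++ β, z ∉ C
  mem_of_mem_boundary : ∀ z ∈ boundary G C, z ∈ α ++ β
  ncard_left : (col '' (boundary G C ∩ {z | z ∈ α})).ncard ≤ m
  ncard_right : (col '' (boundary G C ∩ {z | z ∈ β})).ncard ≤ m
  rainbow : 2 < m → ∀ v ∈ C, Set.InjOn col (G.neighborSet v \ C)

theorem Frame.swap (h : Frame G m C col α β) : Frame G m C col β α where
  connected := h.connected
  isChain := h.isChain_swap
  isChain_swap := h.isChain
  nodup := List.nodup_append_comm.1 h.nodup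
  notMem z hz := h.notMem z (List.mem_append.2 (List.mem_append.1 hz).symm)
  mem_of_mem_boundary z hz :=
    List.mem_append.2 (List.mem_append.1 (h.mem_of_mem_boundary z hz)).symm
  ncard_left := h.ncard_right
  ncard_right := h.ncard_left
  rainbow := h.rainbow

theorem Frame.append [Finite κ] (h : Frame G m C col α β)
    (hcard : (col '' boundary G C).ncard ≤ m) :
    Frame G m C col (α ++ β) [] where
  connected := h.connected
  isChain := by simpa using h.isChain
  isChain_swap := h.isChain
  nodup := by simpa using h.nodup
  notMem := by simpa using h.notMem
  mem_of_mem_boundary := by simpa using h.mem_of_mem_boundary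
  ncard_left := (Set.ncard_le_ncard (Set.image_mono Set.inter_subset_left)).trans hcard
  ncard_right := by simp
  rainbow := h.rainbow

theorem Frame.boundary_eq (h : Frame G m C col α β) :
    boundary G C = (boundary G C ∩ {z | z ∈ α}) ∪ (boundary G C ∩ {z | z ∈ β}) := by
  rw [← Set.inter_union_distrib_left, Set.left_eq_inter]
  exact fun z hz => List.mem_append.1 (h.mem_of_mem_boundary z hz)

theorem Frame.ncard_boundary_le (h : Frame G m C col α β) :
    (col '' boundary G C).ncard ≤ m + m := by
  rw [h.boundary_eq, Set.image_union]
  exact (Set.ncard_union_le _ _).trans (add_le_add h.ncard_left h.ncard_right)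

theorem IsPathColoring.frame [Finite κ] (h : IsPathColoring G m C P col col') (hPC : P ⊆ C)
    (hv : v ∈ C \ P) (hP : ∀ z, z ∈ β ↔ z ∈ P) (hlC : ∀ z ∈ l, z ∉ C)
    (hchain : (l ++ β).IsChain G.Adj) (hchain' : (β ++ l).IsChain G.Adj) (hl : l.Nodup)
    (hβ : β.Nodup) (hbd : ∀ z ∈ boundary G (componentIn G (C \ P) v), z ∉ P → z ∈ l)
    (hcard : (col '' (boundary G (componentIn G (C \ P) v) \ P)).ncard ≤ m) :
    Frame G m (componentIn G (C \ P) v) col' l β where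
  connected := connected_componentIn
  isChain := hchain
  isChain_swap := hchain'
  nodup := hl.append hβ fun z hz hz' => hlC z hz (hPC ((hP z).1 hz'))
  notMem z hz hzD := by
    have hzC := componentIn_subset hv hzD
    rcases List.mem_append.1 hz with hz | hz
    exacts [hlC z hz hzC.1, hzC.2 ((hP z).1 hz)]
  mem_of_mem_boundary z hz := by
    rw [List.mem_append, hP]
    exact (em (z ∈ P)).symm.imp_left (hbd z hz)
  ncard_left := by
    have hsub : boundary G (componentIn G (C \ P) v) ∩ {z | z ∈ l} ⊆
        boundary G (componentIn G (C \ P) v) \ P :=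
      fun z hz => ⟨hz.1, fun hzP => hlC z hz.2 (hPC hzP)⟩
    have heq : Set.EqOn col' col _ := fun z hz => h.eqOn (hsub hz).2
    rw [heq.image_eq]
    exact (Set.ncard_le_ncard (Set.image_mono hsub)).trans hcard
  ncard_right := by
    have hsub : boundary G (componentIn G (C \ P) v) ∩ {z | z ∈ β} ⊆ P :=
      fun z hz => (hP z).1 hz.2
    exact (Set.ncard_le_ncard (Set.image_mono hsub)).trans h.ncard_le
  rainbow hm y hy := by
    have hyC := componentIn_subset hv hy
    have hsub : G.neighborSet y \ componentIn G (C \ P) v ⊆ G.neighborSet y \ (C \ P) :=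
      fun z hz => ⟨hz.1, fun hzC => hz.2 (mem_componentIn_of_adj hy hyC hzC hz.1)⟩
    exact (h.rainbow hm y hyC.1).mono hsub

/-- It suffices to frame the components left over by one recoloured shortest path. -/
theorem Frame.extendable_of_path [Fintype κ] {a b : V} (h : Frame G m C col α β) (hm : 2 ≤ m)
    (hκ : 3 * m ≤ Fintype.card κ) (ha : a ∈ C) {p : (restrictTo G C).Walk a b}
    (hp : p.length = (restrictTo G C).dist a b) (hP : {z | z ∈ p.support} = P)
    (ih : ∀ D ⊂ C, ∀ (col : V → κ) (α β : List V), Frame G m D col α β → Extendable G m D col)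
    (hframe : ∀ col', IsPathColoring G m C P col col' → ∀ v ∈ C \ P,
      ∃ α' β', Frame G m (componentIn G (C \ P) v) col' α' β') : Extendable G m C col := by
  subst hP
  have hPC := support_subset_of_mem p ha
  have hcard := h.ncard_boundary_le
  obtain ⟨col', hcol'⟩ := exists_isPathColoring hm (by omega) h.rainbow ha hp
  refine hcol'.extendable hPC fun v hv => ?_
  obtain ⟨α', β', h'⟩ := hframe col' hcol' v hv
  exact ih _ (componentIn_sdiff_ssubset hPC ⟨a, p.start_mem_support⟩ hv) _ _ _ h'

theorem Frame.extendable_of_subsingleton [Fintype κ] (h : Frame G m C col α β) (hm : 2 ≤ m)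
    (hκ : 3 * m ≤ Fintype.card κ) (hbd : (boundary G C).Subsingleton)
    (ih : ∀ D ⊂ C, ∀ (col : V → κ) (α β : List V), Frame G m D col α β → Extendable G m D col) :
    Extendable G m C col := by
  obtain ⟨l, x, hx, hl, hlx, hnodup, hxl, hlC⟩ : ∃ (l : List V) (x : V), x ∈ C ∧
      (∀ z ∈ boundary G C, z ∈ l) ∧ (l ++ [x]).IsChain G.Adj ∧ l.Nodup ∧
      ([x] ++ l).IsChain G.Adj ∧ ∀ z ∈ l, z ∉ C := by
    rcases hbd.eq_empty_or_singleton with hempty | ⟨u, hu⟩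
    · obtain ⟨x, hx⟩ := h.connected.nonempty
      exact ⟨[], x, hx, by simp [hempty]⟩
    · obtain ⟨huC, x, hx, hxu⟩ : u ∈ boundary G C := hu ▸ rfl
      exact ⟨[u], x, hx, by simp [hu], by simp [hxu.symm], by simp, by simp [hxu], by simp [huC]⟩
  refine h.extendable_of_path hm hκ hx (p := .nil) (by simp) (P := {x}) (by simp) ih ?_
  intro col' hcol' v hv
  have hsub : boundary G (componentIn G (C \ {x}) v) \ {x} ⊆ boundary G C :=
    fun z hz => (boundary_componentIn_subset hv hz.1).resolve_left hz.2
  refine ⟨l, [x], hcol'.frame (Set.singleton_subset_iff.2 hx) hv (by simp) hlC hlx hxl hnodup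
    (by simp) (fun z hz hzx => hl z (hsub ⟨hz, hzx⟩)) ?_⟩
  have hone := Set.ncard_le_one_iff_subsingleton.2 ((hbd.anti hsub).image col)
  omega

theorem isArc_of_isChain (h : (u :: (l ++ [w])).IsChain G.Adj) : IsArc G u w {z | z ∈ l} := by
  rcases eq_or_ne l [] with rfl | hl
  · exact Or.inl ⟨by simp, by simpa using h⟩
  · obtain ⟨hu, hlw⟩ := List.isChain_cons.1 h
    obtain ⟨hmid, -, hw⟩ := List.isChain_append.1 hlw
    have hconn := (SimpleGraph.Walk.ofSupport l hl hmid).connected_induce_support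
    rw [SimpleGraph.Walk.support_ofSupport] at hconn
    refine Or.inr ⟨hconn, ⟨u, rfl, l.head hl, l.head_mem hl, ?_⟩,
      ⟨w, rfl, l.getLast hl, l.getLast_mem hl, ?_⟩⟩
    · exact hu _ (by rw [List.head?_append_of_ne_nil _ hl, List.head?_eq_some_head hl]; rfl)
    · exact (hw _ (List.getLast?_eq_some_getLast hl) w rfl).symm

theorem exists_eq_append_cons {p : V → Prop} (h : ∃ x ∈ l, p x) :
    ∃ s x t, l = s ++ x :: t ∧ p x ∧ ∀ y ∈ s, ¬ p y := by
  obtain ⟨x, hx⟩ : ∃ x, l.find? p = some x := by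
    simpa [← Option.isSome_iff_exists] using h
  rw [List.find?_eq_some_iff_append] at hx
  obtain ⟨hpx, s, t, rfl, hs⟩ := hx
  exact ⟨s, x, t, rfl, by simpa using hpx, by simpa using hs⟩

theorem exists_eq_append_cons_append_cons {p : V → Prop} {x y : V} (hx : x ∈ l) (hy : y ∈ l)
    (hxy : x ≠ y) (hpx : p x) (hpy : p y) :
    ∃ l₁ u l₀ w l₂, l = l₁ ++ u :: (l₀ ++ w :: l₂) ∧ p u ∧ p w ∧
      (∀ z ∈ l₁, ¬ p z) ∧ ∀ z ∈ l₂, ¬ p z := by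
  obtain ⟨l₁, u, r, rfl, hu, hl₁⟩ := exists_eq_append_cons ⟨x, hx, hpx⟩
  have hr : ∃ z ∈ r.reverse, p z := by grind
  obtain ⟨s, w, t, hst, hw, hs⟩ := exists_eq_append_cons hr
  refine ⟨l₁, u, t.reverse, w, s.reverse, ?_, hu, hw, hl₁, by simpa using hs⟩
  rw [← r.reverse_reverse, hst]
  simp

end Frames

section Induction

variable {V κ : Type*} {G : SimpleGraph V} {m : ℕ} {C : Set V} {col col' : V → κ}
  {u w : V} {α β l s l₁ l₀ l₂ : List V}

theorem Frame.isChain_near (h : Frame G m C col (l₁ ++ u :: (l₀ ++ w :: l₂)) β) :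
    (u :: (l₀ ++ [w])).IsChain G.Adj := by
  have hsplit : (l₁ ++ (u :: (l₀ ++ [w]) ++ (l₂ ++ β))).IsChain G.Adj := by simpa using h.isChain
  exact hsplit.right_of_append.left_of_append

theorem Frame.isChain_far (h : Frame G m C col (l₁ ++ u :: (l₀ ++ w :: l₂)) β) (hβ : β ≠ []) :
    (w :: (l₂ ++ β ++ l₁ ++ [u])).IsChain G.Adj := by
  have hleft : ((w :: l₂) ++ β).IsChain G.Adj := h.isChain.suffix ⟨l₁ ++ u :: l₀, by simp⟩
  have hright : (β ++ (l₁ ++ [u])).IsChain G.Adj :=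
    List.IsChain.left_of_append (l₂ := l₀ ++ w :: l₂) (by simpa using h.isChain_swap)
  simpa using hleft.append_overlap hright hβ

theorem Frame.nodup_far (h : Frame G m C col (l₁ ++ u :: (l₀ ++ w :: l₂)) β) :
    (w :: (l₂ ++ β ++ l₁ ++ [u])).Nodup := by
  have hnodup := h.nodup
  simp only [List.nodup_append, List.nodup_cons, List.mem_append, List.mem_cons] at hnodup ⊢
  grind

theorem Frame.isTheta (h : Frame G m C col (l₁ ++ u :: (l₀ ++ w :: l₂)) β) (hβ : β ≠ []) :
    IsTheta G u w {z | z ∈ l₀} {z | z ∈ l₂ ++ β ++ l₁} C := by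
  have hnodup := h.nodup
  have hnotMem := h.notMem
  simp only [List.nodup_append, List.nodup_cons, List.mem_append, List.mem_cons] at hnodup hnotMem
  refine ⟨h.connected, isArc_of_isChain h.isChain_near, ?_, ?_, ?_, ?_, ?_⟩
  · exact (isArc_of_isChain (by simpa using h.isChain_far hβ)).symm
  · grind
  · simp only [Set.mem_union, Set.mem_ofPred_eq, List.mem_append]
    grind
  · simp only [Set.disjoint_left, Set.mem_ofPred_eq, List.mem_append]
    grind
  · simp only [Set.disjoint_left, Set.mem_insert_iff, Set.mem_union, Set.mem_ofPred_eq,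
      List.mem_append]
    grind

/-- When `u` and `w` are the extreme boundary vertices on the first arc, some shortest path from `u`
to `w` leaves only components whose boundary is confined to one side of the closed walk. -/
theorem Frame.exists_crossing [Finite V] (hG : K33MinorFree G)
    (h : Frame G m C col (l₁ ++ u :: (l₀ ++ w :: l₂)) β) (hu : u ∈ boundary G C)
    (hw : w ∈ boundary G C) (hl₁ : ∀ z ∈ l₁, z ∉ boundary G C)
    (hl₂ : ∀ z ∈ l₂, z ∉ boundary G C) :
    ∃ P, IsCrossing G C u w P ∧ ∀ v ∈ C \ P,
      (∀ z ∈ boundary G (componentIn G (C \ P) v), z ∉ P → z ∈ u :: (l₀ ++ [w])) ∨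
      β ≠ [] ∧ ∀ z ∈ boundary G (componentIn G (C \ P) v), z ∉ P → z ∈ β := by
  have htouch : ∀ z ∈ boundary G C, Touches G {z} C := fun z ⟨_, v, hv, hvz⟩ =>
    ⟨z, rfl, v, hv, hvz.symm⟩
  have hmem : ∀ z ∈ boundary G C, z ∈ u :: (l₀ ++ [w]) ∨ z ∈ β := fun z hz => by
    have hz' := h.mem_of_mem_boundary z hz
    have hz₁ : z ∉ l₁ := fun hz₁ => hl₁ z hz₁ hz
    have hz₂ : z ∉ l₂ := fun hz₂ => hl₂ z hz₂ hz
    simp only [List.mem_append, List.mem_cons] at hz' ⊢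
    tauto
  rcases eq_or_ne β [] with rfl | hβ
  · obtain ⟨P, hP⟩ := exists_isCrossing h.connected (htouch u hu) (htouch w hw)
    exact ⟨P, hP, fun v hv => Or.inl fun z hz hzP =>
      (hmem z ((boundary_componentIn_subset hv hz).resolve_left hzP)).resolve_right (by simp)⟩
  · obtain ⟨P, hP, hsides⟩ := (h.isTheta hβ).exists_crossing hG (htouch u hu) (htouch w hw)
    refine ⟨P, hP, fun v hv => ?_⟩
    by_cases hB : Touches G (componentIn G (C \ P) v) {z | z ∈ l₂ ++ β ++ l₁}
    · refine Or.inr ⟨hβ, fun z hz hzP => ?_⟩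
      refine (hmem z ((boundary_componentIn_subset hv hz).resolve_left hzP)).resolve_left ?_
      obtain ⟨-, y, hy, hyz⟩ := hz
      refine fun hnear => hsides v hv hB ⟨y, hy, z, ?_, hyz⟩
      simp only [List.mem_cons, List.mem_append] at hnear
      simp only [Set.mem_insert_iff, Set.mem_ofPred_eq]
      tauto
    · refine Or.inl fun z hz hzP => ?_
      refine (hmem z ((boundary_componentIn_subset hv hz).resolve_left hzP)).resolve_right ?_
      obtain ⟨-, y, hy, hyz⟩ := hz
      exact fun hzβ => hB ⟨y, hy, z, by simp [hzβ], hyz⟩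

/-- A shortest path together with a chain `w, …, u` closing it up frames the components which see
nothing else. -/
theorem IsPathColoring.frame_of_walk [Finite κ] {a b : V} {p : (restrictTo G C).Walk a b}
    (h : IsPathColoring G m C {z | z ∈ p.support} col col')
    (hp : p.length = (restrictTo G C).dist a b) (ha : a ∈ C) (hua : G.Adj u a) (hwb : G.Adj w b)
    (hchain : (w :: (l ++ [u])).IsChain G.Adj) (hl : (w :: (l ++ [u])).Nodup)
    (hlC : ∀ z ∈ w :: (l ++ [u]), z ∉ C) {v : V} (hv : v ∈ C \ {z | z ∈ p.support})
    (hbd : ∀ z ∈ boundary G (componentIn G (C \ {z | z ∈ p.support}) v),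
      z ∉ {z | z ∈ p.support} → z ∈ s) (hs : s ⊆ w :: (l ++ [u]))
    (hcard : (col '' (boundary G C ∩ {z | z ∈ s})).ncard ≤ m) :
    Frame G m (componentIn G (C \ {z | z ∈ p.support}) v) col' (w :: (l ++ [u])) p.support := by
  have hpath : p.support.IsChain G.Adj :=
    p.isChain_adj_support.imp fun _ _ hxy => (restrictTo_adj.1 hxy).2.2
  have hsub : boundary G (componentIn G (C \ {z | z ∈ p.support}) v) \ {z | z ∈ p.support} ⊆
      boundary G C ∩ {z | z ∈ s} := fun z hz =>
    ⟨(boundary_componentIn_subset hv hz.1).resolve_left hz.2, hbd z hz.1 hz.2⟩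
  refine h.frame (support_subset_of_mem p ha) hv (fun z => Iff.rfl) hlC ?_ ?_ hl
    (p.isPath_of_length_eq_dist hp).support_nodup (fun z hz hzp => hs (hbd z hz hzp))
    ((Set.ncard_le_ncard (Set.image_mono hsub)).trans hcard)
  · refine hchain.append hpath ?_
    rw [← List.cons_append, List.getLast?_concat, List.head?_eq_some_head p.support_ne_nil,
      p.head_support]
    simpa using hua
  · refine hpath.append hchain ?_
    rw [List.getLast?_eq_some_getLast p.support_ne_nil, p.getLast_support]
    simpa using hwb.symm

theorem Frame.extendable_of_nontrivial [Finite V] [Fintype κ] (hG : K33MinorFree G) (hm : 2 ≤ m)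
    (hκ : 3 * m ≤ Fintype.card κ) (h : Frame G m C col α β)
    (hα : (boundary G C ∩ {z | z ∈ α}).Nontrivial)
    (ih : ∀ D ⊂ C, ∀ (col : V → κ) (α β : List V), Frame G m D col α β → Extendable G m D col) :
    Extendable G m C col := by
  obtain ⟨x, ⟨hx, hxα⟩, y, ⟨hy, hyα⟩, hxy⟩ := hα
  obtain ⟨l₁, u, l₀, w, l₂, rfl, hu, hw, hl₁, hl₂⟩ :=
    exists_eq_append_cons_append_cons hxα hyα hxy hx hy
  obtain ⟨P, hP, hsides⟩ := h.exists_crossing hG hu hw hl₁ hl₂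
  obtain ⟨a, ha, b, hb, hua, hwb, p, hp, rfl⟩ := hP
  refine h.extendable_of_path hm hκ ha hp rfl ih fun col' hcol' v hv => ?_
  have hnotMem := h.notMem
  simp only [List.mem_append, List.mem_cons] at hnotMem
  rcases hsides v hv with hnear | ⟨hβ, hfar⟩
  · have hp' : p.reverse.length = (restrictTo G C).dist b a := by
      rw [p.length_reverse, hp, SimpleGraph.dist_comm]
    have hsupp : {z | z ∈ p.support} = {z | z ∈ p.reverse.support} := by simp
    have hinfix : u :: (l₀ ++ [w]) <:+: l₁ ++ u :: (l₀ ++ w :: l₂) := ⟨l₁, l₂, by simp⟩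
    have hsub : {z | z ∈ u :: (l₀ ++ [w])} ⊆ {z | z ∈ l₁ ++ u :: (l₀ ++ w :: l₂)} :=
      hinfix.subset
    rw [hsupp] at hcol' hv hnear ⊢
    exact ⟨_, _, hcol'.frame_of_walk hp' hb hwb hua h.isChain_near
      (h.nodup.of_append_left.sublist hinfix.sublist) (by grind) hv hnear (List.Subset.refl _)
      ((Set.ncard_le_ncard (Set.image_mono (Set.inter_subset_inter_right _ hsub))).trans
        h.ncard_left)⟩
  · exact ⟨_, _, hcol'.frame_of_walk hp ha hua hwb (h.isChain_far hβ) h.nodup_far (by grind) hv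
      hfar (fun z hz => by simp [hz]) h.ncard_right⟩

theorem Frame.extendable [Finite V] [Fintype κ] (hG : K33MinorFree G) (hm : 2 ≤ m)
    (hκ : 3 * m ≤ Fintype.card κ) (h : Frame G m C col α β) : Extendable G m C col := by
  induction C using WellFoundedLT.induction generalizing col α β with
  | ind C ih =>
  replace ih : ∀ D ⊂ C, ∀ (col : V → κ) (α β : List V), Frame G m D col α β →
      Extendable G m D col := fun D hD _ _ _ => ih D hD
  by_cases hα : (boundary G C ∩ {z | z ∈ α}).Nontrivial
  · exact h.extendable_of_nontrivial hG hm hκ hα ih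
  by_cases hβ : (boundary G C ∩ {z | z ∈ β}).Nontrivial
  · exact h.swap.extendable_of_nontrivial hG hm hκ hβ ih
  by_cases hbd : (boundary G C).Subsingleton
  · exact h.extendable_of_subsingleton hm hκ hbd ih
  have hcard : (col '' boundary G C).ncard ≤ m := by
    rw [Set.not_nontrivial_iff, ← Set.ncard_le_one_iff_subsingleton] at hα hβ
    calc (col '' boundary G C).ncard ≤ (boundary G C).ncard := Set.ncard_image_le
      _ ≤ 1 + 1 := by
        rw [h.boundary_eq]
        exact (Set.ncard_union_le _ _).trans (add_le_add hα hβ)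
      _ ≤ m := hm
  refine (h.append hcard).extendable_of_nontrivial hG hm hκ ?_ ih
  have hbd' : boundary G C ⊆ {z | z ∈ α ++ β} := h.mem_of_mem_boundary
  rwa [Set.inter_eq_left.2 hbd', ← Set.not_subsingleton_iff]

theorem K33MinorFree.exists_isCleanAt [Finite V] [Fintype κ] (hG : K33MinorFree G) (hm : 2 ≤ m)
    (hκ : 3 * m ≤ Fintype.card κ) :
    ∃ (col : V → κ) (rk : V → ℕ), ∀ v, IsCleanAt m col v {z | G.Adj v z ∧ rk z ≤ rk v} := by
  have hcard : 0 < Fintype.card κ := by omega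
  obtain ⟨k⟩ := Fintype.card_pos_iff.1 hcard
  have hclosed : ∀ v, ∀ y ∈ componentIn G Set.univ v, ∀ z, G.Adj y z →
      z ∈ componentIn G Set.univ v := fun v y hy z hyz =>
    mem_componentIn_of_adj hy (Set.mem_univ y) (Set.mem_univ z) hyz
  have hbd : ∀ v, boundary G (componentIn G Set.univ v) = ∅ := fun v =>
    Set.eq_empty_of_forall_notMem fun z ⟨hz, y, hy, hyz⟩ => hz (hclosed v y hy z hyz)
  obtain ⟨col, rk, -, hclean⟩ : Extendable G m Set.univ fun _ : V => k := by
    refine extendable_of_components fun v _ => ?_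
    have hframe : Frame G m (componentIn G Set.univ v) (fun _ => k) [] [] :=
      ⟨connected_componentIn, by simp, by simp, by simp, by simp, by simp [hbd], by simp, by simp,
        fun _ y hy z hz => (hz.2 (hclosed v y hy z hz.1)).elim⟩
    exact hframe.extendable hG hm hκ
  refine ⟨col, rk, fun v => (hclean v (Set.mem_univ v)).mono ?_⟩
  exact fun z hz => ⟨hz.1, fun _ => hz.2⟩

theorem ne_of_forall_isCleanAt {rk : V → ℕ}
    (h : ∀ v, IsCleanAt m col v {z | G.Adj v z ∧ rk z ≤ rk v}) (huw : G.Adj u w) :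
    col u ≠ col w := by
  intro hcol
  rcases le_total (rk u) (rk w) with hle | hle
  · exact (h w).1 ⟨u, ⟨huw.symm, hle⟩, hcol⟩
  · exact (h u).1 ⟨w, ⟨huw, hle⟩, hcol.symm⟩

theorem K33MinorFree.colorable_six [Finite V] (hG : K33MinorFree G) : G.Colorable 6 := by
  obtain ⟨col, rk, hclean⟩ := hG.exists_isCleanAt (κ := Fin 6) le_rfl (by simp)
  exact ⟨col, ne_of_forall_isCleanAt hclean⟩

theorem isAcyclic_of_rank {ι : Type*} [LinearOrder ι] (rk : V → ι)
    (h : ∀ v, {z | G.Adj v z ∧ rk z ≤ rk v}.Subsingleton) : G.IsAcyclic := by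
  intro v c hc
  obtain ⟨x, hx, hmax⟩ := c.support.toFinset.exists_max_image rk ⟨v, by simp⟩
  rw [List.mem_toFinset] at hx
  have hc' := hc.rotate hx
  have hmax' : ∀ y ∈ (c.rotate x hx).support, rk y ≤ rk x := fun y hy => hmax y (by simpa using hy)
  refine hc'.snd_ne_penultimate (h x ⟨?_, ?_⟩ ⟨?_, ?_⟩)
  · exact (c.rotate x hx).adj_snd hc'.not_nil
  · exact hmax' _ (SimpleGraph.Walk.getVert_mem_support _ _)
  · exact ((c.rotate x hx).adj_penultimate hc'.not_nil).symm
  · exact hmax' _ (SimpleGraph.Walk.getVert_mem_support _ _)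

theorem K33MinorFree.exists_isAcyclicColoring [Finite V] (hG : K33MinorFree G) :
    ∃ c : V → Fin 9, IsAcyclicColoring G c := by
  obtain ⟨c, rk, hclean⟩ := hG.exists_isCleanAt (κ := Fin 9) (m := 3) (by simp) (by simp)
  refine ⟨c, fun u v => ne_of_forall_isCleanAt hclean, fun i j => ?_⟩
  refine isAcyclic_of_rank (fun v => rk v.1) ?_
  rintro ⟨v, hv⟩ ⟨y, hy⟩ hvy ⟨z, hz⟩ hvz
  have hcy : c y ≠ c v := fun h => (hclean v).1 ⟨y, hvy, h⟩
  have hcz : c z ≠ c v := fun h => (hclean v).1 ⟨z, hvz, h⟩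
  have hyz : c y = c z := by
    simp only [Set.mem_ofPred_eq] at hv hy hz
    grind
  exact Subtype.ext ((hclean v).2 (by simp) hvy hvz hyz)

end Induction

section StrongForests

variable {V : Type*} {G : SimpleGraph V} {S T : Set V} {a b u v z : V}

/-- The vertices of the `3`-vertex paths of `G` inside `S`, that is, the union of the components of
`G.induce S` with at least two edges. -/
def cherryHull (G : SimpleGraph V) (S : Set V) : Set V :=
  {z | ∃ a ∈ S, ∃ b ∈ S, ∃ c ∈ S, a ≠ c ∧ G.Adj a b ∧ G.Adj b c ∧ (z = a ∨ z = b)}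

theorem cherryHull_subset : cherryHull G S ⊆ S := by
  rintro z ⟨a, ha, b, hb, c, -, -, -, -, rfl | rfl⟩ <;> assumption

theorem cherryHull_subset_cherryHull : cherryHull G S ⊆ cherryHull G (cherryHull G S) := by
  rintro z ⟨a, ha, b, hb, c, hc, hac, hab, hbc, hz⟩
  exact ⟨a, ⟨a, ha, b, hb, c, hc, hac, hab, hbc, Or.inl rfl⟩,
    b, ⟨a, ha, b, hb, c, hc, hac, hab, hbc, Or.inr rfl⟩,
    c, ⟨c, hc, b, hb, a, ha, hac.symm, hbc.symm, hab.symm, Or.inl rfl⟩, hac, hab, hbc, hz⟩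

theorem mem_cherryHull_of_adj (hu : u ∈ cherryHull G S) (hv : v ∈ S) (huv : G.Adj u v) :
    v ∈ cherryHull G S := by
  obtain ⟨a, ha, b, hb, c, hc, hac, hab, hbc, rfl | rfl⟩ := hu
  · by_cases hvb : v = b
    · exact hvb ▸ ⟨u, ha, b, hb, c, hc, hac, hab, hbc, Or.inr rfl⟩
    · exact ⟨v, hv, u, ha, b, hb, hvb, huv.symm, hab, Or.inl rfl⟩
  · by_cases hva : v = a
    · exact hva ▸ ⟨a, ha, u, hb, c, hc, hac, hab, hbc, Or.inl rfl⟩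
    · exact ⟨v, hv, u, hb, a, ha, hva, huv.symm, hab.symm, Or.inl rfl⟩

theorem eq_of_adj_of_notMem_cherryHull (hz : z ∈ S) (hzT : z ∉ cherryHull G S) (ha : a ∈ S)
    (hb : b ∈ S) (hza : G.Adj z a) (hzb : G.Adj z b) : a = b := by
  by_contra hab
  exact hzT ⟨a, ha, z, hz, b, hb, hab, hza.symm, hzb, Or.inr rfl⟩

theorem isStrongForest_two_of_subset_cherryHull [Finite V] (hT : (G.induce T).IsAcyclic)
    (h : T ⊆ cherryHull G T) : IsStrongForest G 2 T := by
  refine ⟨hT, fun ⟨z, hz⟩ => ?_⟩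
  obtain ⟨a, ha, b, hb, c, hc, hac, hab, hbc, hzab⟩ := h hz
  have hab' : (G.induce T).Adj ⟨a, ha⟩ ⟨b, hb⟩ := hab
  have hbc' : (G.induce T).Adj ⟨b, hb⟩ ⟨c, hc⟩ := hbc
  have hzb : (G.induce T).Reachable ⟨z, hz⟩ ⟨b, hb⟩ := by
    rcases hzab with rfl | rfl
    exacts [hab'.reachable, .rfl]
  have hmem : ∀ x y : T, (G.induce T).Adj x y → (G.induce T).Reachable ⟨z, hz⟩ x →
      s(x, y) ∈ {e | e ∈ (G.induce T).edgeSet ∧ ∀ x ∈ e, (G.induce T).Reachable ⟨z, hz⟩ x} := by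
    refine fun x y hxy hx => ⟨hxy, fun t ht => ?_⟩
    rcases Sym2.mem_iff.1 ht with rfl | rfl
    exacts [hx, hx.trans hxy.reachable]
  refine Nat.succ_le_of_lt ((Set.one_lt_ncard_iff (Set.toFinite _)).2
    ⟨_, _, hmem _ _ hab'.symm hzb, hmem _ _ hbc' hzb, fun h =>
      hac (congrArg Subtype.val (Sym2.congr_right.1 h))⟩)

theorem isStrongForest_two_cherryHull [Finite V] (hS : (G.induce S).IsAcyclic) :
    IsStrongForest G 2 (cherryHull G S) :=
  isStrongForest_two_of_subset_cherryHull
    (hS.embedding (G.induceHomOfLE cherryHull_subset)) cherryHull_subset_cherryHull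

theorem exists_adj_of_two_le_compEdgeCount (h : 2 ≤ compEdgeCount G u) (v : V) :
    ∃ w, w ≠ u ∧ w ≠ v ∧ (G.Adj w u ∨ G.Adj w v) := by
  obtain ⟨e, ⟨he, hreach⟩, hne⟩ := Set.exists_ne_of_one_lt_ncard h s(u, v)
  obtain ⟨z, hz, hzuv⟩ : ∃ z ∈ e, z ∉ ({u, v} : Set V) := by
    induction e with
    | _ a b =>
      have hab : a ≠ b := SimpleGraph.Adj.ne he
      by_contra! hall
      have ha := hall a (by simp)
      have hb := hall b (by simp)
      simp only [Set.mem_insert_iff, Set.mem_singleton_iff] at ha hb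
      grind
  obtain ⟨p⟩ := hreach z hz
  obtain ⟨d, -, hfst, hsnd⟩ := p.exists_boundary_dart {u, v} (by simp) hzuv
  have hd := d.adj.symm
  simp only [Set.mem_insert_iff, Set.mem_singleton_iff, not_or] at hfst hsnd
  refine ⟨d.snd, hsnd.1, hsnd.2, ?_⟩
  rcases hfst with h | h <;> simp [← h, hd]

theorem KValid.mem_edgeSet {k : ℕ} {e : Sym2 V} (h : KValid G k e) : e ∈ G.edgeSet :=
  let ⟨_, _, he, _⟩ := h
  he

/-- The tree edge adjacent to a valid edge cannot close a triangle. -/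
theorem KValid.exists_adj_not_adj {e : Sym2 V} (h : KValid G 2 e) :
    ∃ w ∉ e, (∃ u ∈ e, G.Adj w u) ∧ ∃ v ∈ e, ¬ G.Adj w v := by
  obtain ⟨S, ⟨hS, hcount⟩, he, heS⟩ := h
  induction e with
  | _ u v =>
    have hu : u ∈ S := heS u (by simp)
    have hv : v ∈ S := heS v (by simp)
    obtain ⟨⟨w, hw⟩, hwu, hwv, hadj⟩ :=
      exists_adj_of_two_le_compEdgeCount (hcount ⟨u, hu⟩) ⟨v, hv⟩
    have htri : ¬ (G.Adj w u ∧ G.Adj w v) := by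
      rintro ⟨hwu, hwv⟩
      have hwu' : (G.induce S).Adj ⟨w, hw⟩ ⟨u, hu⟩ := hwu
      have hwv' : (G.induce S).Adj ⟨w, hw⟩ ⟨v, hv⟩ := hwv
      have huv' : (G.induce S).Adj ⟨u, hu⟩ ⟨v, hv⟩ := he
      exact hS.cliqueFree le_rfl _ (SimpleGraph.is3Clique_triple_iff.2 ⟨hwu', hwv', huv'⟩)
    have hadj' : G.Adj w u ∨ G.Adj w v := hadj
    have hne : w ∉ s(u, v) := by simpa [not_or] using And.intro hwu hwv
    refine ⟨w, hne, ?_⟩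
    simp only [Sym2.mem_iff, exists_eq_or_imp, exists_eq_left]
    tauto

theorem fStrong_le_card {ι : Type*} [Fintype ι] {k : ℕ} (F : ι → Set V)
    (hF : ∀ i, IsStrongForest G k (F i))
    (hcover : ∀ e, KValid G k e → ∃ i, e ∈ forestEdges G (F i)) :
    fStrong G k ≤ Fintype.card ι := by
  refine Nat.sInf_le ⟨F ∘ (Fintype.equivFin ι).symm, fun i => hF _, fun e he => ?_⟩
  obtain ⟨i, hi⟩ := hcover e he
  exact ⟨Fintype.equivFin ι i, by simpa using hi⟩

end StrongForests

theorem K33MinorFree.exists_fiber_coloring {V ι : Type*} [Finite V] {G : SimpleGraph V}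
    (hG : K33MinorFree G) (f : V → ι) (hconn : ∀ v, (G.induce (f ⁻¹' {f v})).Connected) :
    ∃ κ : V → Fin 6, (∀ a b, f a = f b → κ a = κ b) ∧
      ∀ a b, G.Adj a b → κ a = κ b → f a = f b := by
  let H : SimpleGraph (Set.range f) :=
    SimpleGraph.fromRel fun i j => Touches G (f ⁻¹' {i.1}) (f ⁻¹' {j.1})
  have hminor : IsMinorOf H G := by
    refine ⟨fun i => f ⁻¹' {i.1}, fun i j hij => ?_, ?_, ?_, ?_⟩
    · exact Disjoint.preimage f (Set.disjoint_singleton.2 fun h => hij (Subtype.ext h))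
    · rintro ⟨_, v, rfl⟩
      exact ⟨v, rfl⟩
    · rintro ⟨_, v, rfl⟩
      exact hconn v
    · exact fun i j hij => hij.2.elim id Touches.symm
  obtain ⟨C⟩ := (hG.of_isMinorOf hminor).colorable_six
  refine ⟨fun v => C ⟨f v, v, rfl⟩, fun a b h => congrArg C (Subtype.ext h), fun a b hab h => ?_⟩
  by_contra hne
  exact C.valid (v := ⟨f a, a, rfl⟩) (w := ⟨f b, b, rfl⟩)
    ⟨fun h => hne (congrArg Subtype.val h), Or.inl ⟨a, rfl, b, rfl, hab⟩⟩ h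

section Spiders

variable {V : Type*} {G : SimpleGraph V} {M : Set V} {mate ctr : V → V} {a b z : V}

/-- A family of disjoint spiders whose legs have length two: the vertices `M` of the legs are
paired by `mate` into the legs, and the body `ctr z` of the spider containing `z ∈ M` is adjacent
to exactly one of `z` and `mate z`. Outside `M`, `ctr` is the identity, so that its fibres are
the spiders and the single vertices outside them. -/
structure IsSpiderSystem (G : SimpleGraph V) (M : Set V) (mate ctr : V → V) : Prop where
  mate_mem : ∀ z ∈ M, mate z ∈ M
  adj_mate : ∀ z ∈ M, G.Adj z (mate z)
  eq_mate : ∀ z ∈ M, ∀ y ∈ M, G.Adj z y → y = mate z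
  ctr_mate : ∀ z ∈ M, ctr (mate z) = ctr z
  ctr_notMem : ∀ z ∈ M, ctr z ∉ M
  adj_ctr_mate : ∀ z ∈ M, (G.Adj (ctr z) (mate z) ↔ ¬ G.Adj (ctr z) z)
  ctr_eq_self : ∀ z ∉ M, ctr z = z

namespace IsSpiderSystem

theorem mate_mate (h : IsSpiderSystem G M mate ctr) (hz : z ∈ M) : mate (mate z) = z :=
  (h.eq_mate _ (h.mate_mem z hz) z hz (h.adj_mate z hz).symm).symm

theorem ctr_ctr (h : IsSpiderSystem G M mate ctr) (z : V) : ctr (ctr z) = ctr z := by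
  by_cases hz : z ∈ M
  · exact h.ctr_eq_self _ (h.ctr_notMem z hz)
  · rw [h.ctr_eq_self z hz, h.ctr_eq_self z hz]

theorem exists_knee (h : IsSpiderSystem G M mate ctr) (hz : z ∈ M) :
    ∃ y ∈ M, G.Adj (ctr y) y ∧ ctr y = ctr z ∧ (z = mate y ∨ z = y) := by
  by_cases hadj : G.Adj (ctr z) z
  · exact ⟨z, hz, hadj, rfl, Or.inr rfl⟩
  · refine ⟨mate z, h.mate_mem z hz, ?_, h.ctr_mate z hz, Or.inl (h.mate_mate hz).symm⟩
    rw [h.ctr_mate z hz]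
    exact (h.adj_ctr_mate z hz).2 hadj

theorem connected_induce_fiber (h : IsSpiderSystem G M mate ctr) (v : V) :
    (G.induce (ctr ⁻¹' {ctr v})).Connected := by
  have hctr : ctr v ∈ ctr ⁻¹' {ctr v} := h.ctr_ctr v
  refine connected_induce_of_subset_componentIn hctr fun z (hz : ctr z = ctr v) => ?_
  by_cases hzM : z ∈ M
  · obtain ⟨y, hyM, hadj, hyz, hzy⟩ := h.exists_knee hzM
    have hyv : ctr y = ctr v := hyz.trans hz
    have hy : y ∈ componentIn G (ctr ⁻¹' {ctr v}) (ctr v) :=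
      mem_componentIn_of_adj mem_componentIn_self hctr hyv (hyv ▸ hadj)
    rcases hzy with rfl | rfl
    · exact mem_componentIn_of_adj hy hyv hz (h.adj_mate y hyM)
    · exact hy
  · rw [← hz, h.ctr_eq_self z hzM]
    exact mem_componentIn_self

/-- The distance from `z` to the body of its spider. -/
noncomputable def depth (G : SimpleGraph V) (M : Set V) (ctr : V → V) (z : V) : ℕ :=
  if z ∉ M then 0 else if G.Adj (ctr z) z then 1 else 2

theorem eq_of_depth_le (h : IsSpiderSystem G M mate ctr) (hctr : ctr a = ctr b)
    (hab : G.Adj a b) (hle : depth G M ctr b ≤ depth G M ctr a) :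
    b = if G.Adj (ctr a) a then ctr a else mate a := by
  by_cases ha : a ∈ M <;> by_cases hb : b ∈ M
  · obtain rfl := h.eq_mate a ha b hb hab
    have hnot : ¬ G.Adj (ctr a) a := fun hadj => by
      have hnot' := mt (h.adj_ctr_mate a ha).1 (not_not_intro hadj)
      simp [depth, ha, hb, ← hctr, hadj, hnot'] at hle
    rw [if_neg hnot]
  · have hb' : b = ctr a := ((h.ctr_eq_self b hb).symm).trans hctr.symm
    rw [if_pos (hb' ▸ hab.symm), hb']
  · simp only [depth, ha, hb, not_true_eq_false, not_false_eq_true, if_true, if_false] at hle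
    split_ifs at hle <;> omega
  · exact (hab.ne ((h.ctr_eq_self a ha).symm.trans (hctr.trans (h.ctr_eq_self b hb)))).elim

theorem isStrongForest_two [Finite V] (h : IsSpiderSystem G M mate ctr) {C : Set V}
    (hC : C ⊆ ctr '' M)
    (hadj : ∀ a b, ctr a ∈ C → ctr b ∈ C → G.Adj a b → ctr a = ctr b) :
    IsStrongForest G 2 (ctr ⁻¹' C) := by
  apply isStrongForest_two_of_subset_cherryHull
  · refine isAcyclic_of_rank (fun v : ctr ⁻¹' C => depth G M ctr v) fun ⟨a, ha⟩ => ?_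
    have hunique : ∀ b : ctr ⁻¹' C, (G.induce (ctr ⁻¹' C)).Adj ⟨a, ha⟩ b ∧
        depth G M ctr b ≤ depth G M ctr a → b.1 = if G.Adj (ctr a) a then ctr a else mate a :=
      fun ⟨b, hb⟩ ⟨hab, hle⟩ => h.eq_of_depth_le (hadj a b ha hb hab) hab hle
    exact fun b hb b' hb' => Subtype.ext ((hunique b hb).trans (hunique b' hb').symm)
  · intro z hz
    obtain ⟨m, hm, hmz⟩ := hC hz
    obtain ⟨y, hy, hyz, hyadj, hzy⟩ : ∃ y ∈ M, ctr y = ctr z ∧ G.Adj (ctr y) y ∧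
        (z = ctr y ∨ z = y ∨ z = mate y) := by
      by_cases hzM : z ∈ M
      · obtain ⟨y, hy, hadj, hyz, hzy⟩ := h.exists_knee hzM
        exact ⟨y, hy, hyz, hadj, Or.inr hzy.symm⟩
      · obtain ⟨y, hy, hadj, hym, -⟩ := h.exists_knee hm
        have hyz := hym.trans hmz
        exact ⟨y, hy, hyz, hadj, Or.inl ((h.ctr_eq_self z hzM).symm.trans hyz.symm)⟩
    have hyC : ctr y ∈ C := hyz ▸ hz
    have hbody : ctr (ctr y) ∈ C := (h.ctr_ctr y).symm ▸ hyC
    have hfoot : ctr (mate y) ∈ C := (h.ctr_mate y hy).symm ▸ hyC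
    have hne : ctr y ≠ mate y := fun heq => h.ctr_notMem y hy (heq ▸ h.mate_mem y hy)
    rcases hzy with rfl | rfl | rfl
    · exact ⟨ctr y, hbody, y, hyC, _, hfoot, hne, hyadj, h.adj_mate y hy, Or.inl rfl⟩
    · exact ⟨_, hbody, z, hyC, _, hfoot, hne, hyadj, h.adj_mate z hy, Or.inr rfl⟩
    · exact ⟨_, hfoot, y, hyC, _, hbody, hne.symm, (h.adj_mate y hy).symm, hyadj.symm, Or.inl rfl⟩

end IsSpiderSystem

/-- The ends of the valid edges of `G` that are components of `G.induce S`. -/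
def isolatedEnds (G : SimpleGraph V) (S : Set V) : Set V :=
  {z | z ∈ S ∧ z ∉ cherryHull G S ∧ ∃ z' ∈ S, KValid G 2 s(z, z')}

theorem exists_isSpiderSystem_isolatedEnds (G : SimpleGraph V) (S : Set V) :
    ∃ mate ctr, IsSpiderSystem G (isolatedEnds G S) mate ctr := by
  rcases isEmpty_or_nonempty V with hV | hV
  · exact ⟨id, id, by constructor <;> exact fun z => isEmptyElim z⟩
  choose! body hbody using fun e (he : KValid G 2 e) => he.exists_adj_not_adj
  choose! mate hmateS hvalid using fun z (hz : z ∈ isolatedEnds G S) => hz.2.2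
  have hadj : ∀ z ∈ isolatedEnds G S, G.Adj z (mate z) := fun z hz => (hvalid z hz).mem_edgeSet
  have huniq : ∀ z ∈ isolatedEnds G S, ∀ y ∈ S, G.Adj z y → y = mate z := fun z hz y hy hzy =>
    eq_of_adj_of_notMem_cherryHull hz.1 hz.2.1 hy (hmateS z hz) hzy (hadj z hz)
  have hmate : ∀ z ∈ isolatedEnds G S, mate z ∈ isolatedEnds G S := fun z hz =>
    ⟨hmateS z hz, fun h => hz.2.1 (mem_cherryHull_of_adj h hz.1 (hadj z hz).symm), z, hz.1,
      Sym2.eq_swap ▸ hvalid z hz⟩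
  have hmate_mate : ∀ z ∈ isolatedEnds G S, mate (mate z) = z := fun z hz =>
    (huniq _ (hmate z hz) z hz.1 (hadj z hz).symm).symm
  have hbody_adj : ∀ z ∈ isolatedEnds G S,
      (G.Adj (body s(z, mate z)) (mate z) ↔ ¬ G.Adj (body s(z, mate z)) z) := by
    intro z hz
    obtain ⟨-, hadj, hnot⟩ := hbody _ (hvalid z hz)
    simp only [Sym2.mem_iff, exists_eq_or_imp, exists_eq_left] at hadj hnot
    tauto
  have hbody_notMem : ∀ z ∈ isolatedEnds G S, body s(z, mate z) ∉ isolatedEnds G S := by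
    intro z hz hw
    obtain ⟨hnotMem, hadj, -⟩ := hbody _ (hvalid z hz)
    simp only [Sym2.mem_iff, not_or, exists_eq_or_imp, exists_eq_left] at hnotMem hadj
    rcases hadj with hadj | hadj
    · exact hnotMem.2 (huniq z hz _ hw.1 hadj.symm)
    · exact hnotMem.1 ((huniq _ (hmate z hz) _ hw.1 hadj.symm).trans (hmate_mate z hz))
  refine ⟨mate, fun z => if z ∈ isolatedEnds G S then body s(z, mate z) else z, hmate, hadj,
    fun z hz y hy => huniq z hz y hy.1, fun z hz => ?_, fun z hz => ?_, fun z hz => ?_,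
    fun z hz => if_neg hz⟩
  · simp only [if_pos hz, if_pos (hmate z hz), hmate_mate z hz, Sym2.eq_swap]
  · simpa only [if_pos hz] using hbody_notMem z hz
  · simpa only [if_pos hz] using hbody_adj z hz

theorem exists_cover_of_isAcyclic [Finite V] (hG : K33MinorFree G) {S : Set V}
    (hS : (G.induce S).IsAcyclic) :
    ∃ F : Option (Fin 6) → Set V, (∀ i, IsStrongForest G 2 (F i)) ∧
      ∀ e, KValid G 2 e → (∀ x ∈ e, x ∈ S) → ∃ i, e ∈ forestEdges G (F i) := by
  obtain ⟨mate, ctr, h⟩ := exists_isSpiderSystem_isolatedEnds G S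
  obtain ⟨κ, hκ, hκadj⟩ := hG.exists_fiber_coloring ctr h.connected_induce_fiber
  let C (k : Fin 6) : Set V := ctr '' {z | z ∈ isolatedEnds G S ∧ κ z = k}
  have hκC : ∀ {k z}, ctr z ∈ C k → κ z = k := by
    rintro k z ⟨y, ⟨-, rfl⟩, hyz⟩
    exact (hκ y z hyz).symm
  refine ⟨fun i => i.elim (cherryHull G S) fun k => ctr ⁻¹' C k, ?_, fun e he heS => ?_⟩
  · rintro (- | k)
    · exact isStrongForest_two_cherryHull hS
    · exact h.isStrongForest_two (Set.image_mono fun z hz => hz.1)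
        fun a b ha hb hab => hκadj a b hab ((hκC ha).trans (hκC hb).symm)
  · have hadj := he.mem_edgeSet
    by_cases hhull : ∃ x ∈ e, x ∈ cherryHull G S
    · refine ⟨none, hadj, fun y hy => ?_⟩
      obtain ⟨x, hx, hxS⟩ := hhull
      by_cases hxy : x = y
      · exact hxy ▸ hxS
      · obtain rfl := (Sym2.mem_and_mem_iff hxy).1 ⟨hx, hy⟩
        exact mem_cherryHull_of_adj hxS (heS y hy) hadj
    · push Not at hhull
      have hM : ∀ x ∈ e, x ∈ isolatedEnds G S := fun x hx =>
        ⟨heS x hx, hhull x hx, Sym2.Mem.other hx, heS _ (Sym2.other_mem hx),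
          by rwa [Sym2.other_spec hx]⟩
      induction e with
      | _ u v =>
        have hu := hM u (by simp)
        have hv := hM v (by simp)
        have huv : ctr u = ctr v := by
          rw [h.eq_mate u hu v hv hadj, h.ctr_mate u hu]
        have huC : ctr u ∈ C (κ u) := ⟨u, ⟨hu, rfl⟩, rfl⟩
        have hvC : ctr v ∈ C (κ u) := huv ▸ huC
        refine ⟨some (κ u), hadj, fun x hx => ?_⟩
        rcases Sym2.mem_iff.1 hx with rfl | rfl
        exacts [huC, hvC]

theorem fStrong_two_le_of_isAcyclicColoring [Finite V] (hG : K33MinorFree G) {n : ℕ}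
    {c : V → Fin n} (hc : IsAcyclicColoring G c) : fStrong G 2 ≤ n.choose 2 * 7 := by
  have hacyc : ∀ p : Sym2 (Fin n), (G.induce {v | c v ∈ p}).IsAcyclic := by
    intro p
    induction p with
    | _ i j =>
      have hset : {v | c v ∈ s(i, j)} = {v | c v = i ∨ c v = j} := Set.ext fun _ => Sym2.mem_iff
      exact hset ▸ hc.2 i j
  choose F hF hcover using fun p => exists_cover_of_isAcyclic hG (hacyc p)
  calc
    fStrong G 2 ≤ Fintype.card ({p : Sym2 (Fin n) // ¬ p.IsDiag} × Option (Fin 6)) := by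
      refine fStrong_le_card (fun i => F i.1.1 i.2) (fun i => hF _ _) fun e he => ?_
      have hdiag : ¬ (e.map c).IsDiag := by
        have hadj := he.mem_edgeSet
        induction e with
        | _ u v => exact hc.1 u v hadj
      obtain ⟨i, hi⟩ := hcover (e.map c) e he fun x hx => Sym2.mem_map.2 ⟨x, hx, rfl⟩
      exact ⟨(⟨e.map c, hdiag⟩, i), hi⟩
    _ = n.choose 2 * 7 := by
      rw [Fintype.card_prod, Sym2.card_subtype_not_diag, Fintype.card_option, Fintype.card_fin,
        Fintype.card_fin]

end Spiders

theorem fStrong_two_le_of_planar_general {V : Type*} [Finite V] (G : SimpleGraph V)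
    (hG : K33MinorFree G) :
    fStrong G 2 ≤ 252 :=
  let ⟨_, hc⟩ := hG.exists_isAcyclicColoring
  fStrong_two_le_of_isAcyclicColoring hG hc

/-- Every planar finite simple graph `G` satisfies `f₂(G) ≤ 310`. -/
theorem fStrong_two_le_of_planar {V : Type} [Fintype V] (G : SimpleGraph V)
    (hG : IsPlanar G) :
    fStrong G 2 ≤ 310 :=
  (fStrong_two_le_of_planar_general G hG.2).trans (by norm_num)

end InducedArboricity
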